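/- arXiv:2006.10581 — 6 statements merged into one kernel-verified Lean document; each statement's English description precedes it below -/
import Mathlib

section
/- Let d, k, ℓ ≥ 1 be integers and σ > 0. Let Σ_T ∈ ℝ^{d×d} be positive semidefinite and let A ∈ ℝ^{d×d} satisfy A Aᵀ = Σ_T. Let z be a standard Gaussian vector in ℝ^d, let x = A z, and let w be an independent random vector in ℝ^k with i.i.d. N(0, σ²) coordinates. Let V ∈ ℝ^{k×ℓ} and W_T, Ŵ_T ∈ ℝ^{ℓ×d}. Setting y = V φ(W_T x) + w and ŷ = V φ(Ŵ_T x), one has E[‖ŷ − y‖²] ≥ (1/4) σ_min(V)² · trace((Ŵ_T − W_T) Σ_T (Ŵ_T − W_T)ᵀ) + k σ², where σ_min(V) denotes the smallest singular value of V. -/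
open MeasureTheory ProbabilityTheory Matrix

/-- The ReLU function. -/
noncomputable def relu (t : ℝ) : ℝ := max t 0

/-- The smallest singular value of a matrix, i.e. the infimum of `‖V u‖` over
Euclidean-unit vectors `u`. -/
noncomputable def sigmaMin {k l : ℕ} (V : Matrix (Fin k) (Fin l) ℝ) : ℝ :=
  sInf {r : ℝ | ∃ u : Fin l → ℝ, ∑ i, u i ^ 2 = 1 ∧
    r = Real.sqrt (∑ i, (V.mulVec u) i ^ 2)}

lemma gauss_memLp {n : ℕ} (v : NNReal) (i : Fin n) :
    MemLp (fun z : Fin n → ℝ => z i) 2 (Measure.pi fun _ : Fin n => gaussianReal 0 v) := by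
  have h : MemLp (id : ℝ → ℝ) 2 (gaussianReal 0 v) := by
    simpa using memLp_id_gaussianReal (μ := 0) (v := v) 2
  exact h.comp_measurePreserving (measurePreserving_eval (fun _ : Fin n => gaussianReal 0 v) i)

lemma gauss_mean {n : ℕ} (v : NNReal) (i : Fin n) :
    ∫ z : Fin n → ℝ, z i ∂(Measure.pi fun _ : Fin n => gaussianReal 0 v) = 0 := by
  rw [integral_eval (μ := fun _ : Fin n => gaussianReal 0 v), integral_id_gaussianReal]

lemma gauss_lin_memLp {n : ℕ} (v : NNReal) (c : Fin n → ℝ) :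
    MemLp (fun z : Fin n → ℝ => ∑ i, c i * z i) 2
      (Measure.pi fun _ : Fin n => gaussianReal 0 v) :=
  memLp_finsetSum _ fun i _ => (gauss_memLp v i).const_mul (c i)

lemma gauss_lin_mean {n : ℕ} (v : NNReal) (c : Fin n → ℝ) :
    ∫ z : Fin n → ℝ, (∑ i, c i * z i) ∂(Measure.pi fun _ : Fin n => gaussianReal 0 v) = 0 := by
  rw [integral_finsetSum]
  · simp [integral_const_mul, gauss_mean]
  · intro i _
    exact ((gauss_memLp v i).integrable (by norm_num)).const_mul _

lemma gauss_lin_sq {n : ℕ} (v : NNReal) (c : Fin n → ℝ) :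
    ∫ z : Fin n → ℝ, (∑ i, c i * z i) ^ 2 ∂(Measure.pi fun _ : Fin n => gaussianReal 0 v)
      = (∑ i, c i ^ 2) * v := by
  have h : MemLp (id : ℝ → ℝ) 2 (gaussianReal 0 v) := by
    simpa using memLp_id_gaussianReal (μ := 0) (v := v) 2
  have h1 := variance_sum_pi (μ := fun _ : Fin n => gaussianReal 0 v)
    (X := fun i (t : ℝ) => c i * t) (fun i => h.const_mul (c i))
  have e : (∑ i, fun ω : Fin n → ℝ => c i * ω i) = fun z : Fin n → ℝ => ∑ i, c i * z i := by
    ext z; simp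
  rw [e, variance_of_integral_eq_zero (gauss_lin_memLp v c).aestronglyMeasurable.aemeasurable
    (gauss_lin_mean v c)] at h1
  rw [h1, Finset.sum_mul]
  refine Finset.sum_congr rfl fun i _ => ?_
  rw [variance_const_mul, variance_fun_id_gaussianReal]

lemma gauss_coord_sq {n : ℕ} (v : NNReal) (i : Fin n) :
    ∫ z : Fin n → ℝ, z i ^ 2 ∂(Measure.pi fun _ : Fin n => gaussianReal 0 v) = v := by
  have h := gauss_lin_sq v (fun j => if j = i then (1 : ℝ) else 0)
  simpa using h

lemma relu_comp_memLp {α : Type*} [MeasurableSpace α] {μ : Measure α} {f : α → ℝ}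
    (hf : MemLp f 2 μ) : MemLp (fun x => relu (f x)) 2 μ := by
  refine hf.of_le ?_ (Filter.Eventually.of_forall fun x => ?_)
  · exact (continuous_id.max continuous_const).comp_aestronglyMeasurable hf.1
  · simp only [relu, Real.norm_eq_abs]
    rw [abs_of_nonneg (le_max_right _ _)]
    exact max_le (le_abs_self _) (abs_nonneg _)

lemma relu_pair (s t : ℝ) :
    (1 / 2) * (s - t) ^ 2 ≤ (relu s - relu t) ^ 2 + (relu (-s) - relu (-t)) ^ 2 := by
  have key : ∀ r : ℝ, relu r - relu (-r) = r := by
    intro r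
    unfold relu
    rcases le_total r 0 with h | h
    · rw [max_eq_right h, max_eq_left (by linarith)]; ring
    · rw [max_eq_left h, max_eq_right (by linarith)]; ring
  have h : s - t = (relu s - relu t) - (relu (-s) - relu (-t)) := by
    linarith [key s, key t]
  rw [h]
  nlinarith [sq_nonneg ((relu s - relu t) + (relu (-s) - relu (-t)))]

lemma relu_gap {n : ℕ} (a b : Fin n → ℝ) :
    (1 / 4) * ∑ i, (a i - b i) ^ 2 ≤
      ∫ z : Fin n → ℝ, (relu (∑ i, a i * z i) - relu (∑ i, b i * z i)) ^ 2
        ∂(Measure.pi fun _ : Fin n => gaussianReal 0 1) := by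
  set μ := (Measure.pi fun _ : Fin n => gaussianReal 0 1) with hμ
  set g : (Fin n → ℝ) → ℝ := fun z =>
    (relu (∑ i, a i * z i) - relu (∑ i, b i * z i)) ^ 2 with hg
  have hneg : MeasurePreserving (fun (z : Fin n → ℝ) i => -(z i)) μ μ := by
    refine measurePreserving_pi (f := fun _ (t : ℝ) => -t) _ _ fun i => ⟨measurable_neg, ?_⟩
    rw [gaussianReal_map_neg, neg_zero]
  have gi : Integrable g μ :=
    ((relu_comp_memLp (gauss_lin_memLp 1 a)).sub (relu_comp_memLp (gauss_lin_memLp 1 b))).integrable_sq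
  have gi' : Integrable (fun z => g (fun i => -(z i))) μ := hneg.integrable_comp_of_integrable gi
  have e1 : ∫ z, g (fun i => -(z i)) ∂μ = ∫ z, g z ∂μ :=
    hneg.integral_comp (MeasurableEquiv.neg (Fin n → ℝ)).measurableEmbedding g
  have e2 := gauss_lin_sq (1 : NNReal) (fun i => a i - b i)
  have i2 := (gauss_lin_memLp (1 : NNReal) (fun i => a i - b i)).integrable_sq
  have e3 : ∫ z, (1 / 2) * (∑ i, (a i - b i) * z i) ^ 2 ∂μ
      ≤ ∫ z, (g z + g (fun i => -(z i))) ∂μ := by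
    refine integral_mono (i2.const_mul _) (gi.add gi') fun z => ?_
    have := relu_pair (∑ i, a i * z i) (∑ i, b i * z i)
    simp only [hg, mul_neg, Finset.sum_neg_distrib, sub_mul, Finset.sum_sub_distrib]
    exact this
  rw [integral_add gi gi', e1, integral_const_mul, e2] at e3
  simp only [NNReal.coe_one, mul_one] at e3
  linarith

lemma sigmaMin_sq_le {k l : ℕ} (V : Matrix (Fin k) (Fin l) ℝ) (u : Fin l → ℝ) :
    sigmaMin V ^ 2 * ∑ j, u j ^ 2 ≤ ∑ i, (V.mulVec u) i ^ 2 := by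
  have hS : 0 ≤ ∑ j, u j ^ 2 := Finset.sum_nonneg fun _ _ => sq_nonneg _
  have hR : 0 ≤ ∑ i, (V.mulVec u) i ^ 2 := Finset.sum_nonneg fun _ _ => sq_nonneg _
  rcases hS.eq_or_lt with h | h
  · rw [← h, mul_zero]; exact hR
  set r := Real.sqrt (∑ j, u j ^ 2) with hr
  have hr2 : r ^ 2 = ∑ j, u j ^ 2 := Real.sq_sqrt hS
  have hr0 : 0 < r := Real.sqrt_pos.2 h
  have h0 : 0 ≤ sigmaMin V := by
    apply Real.sInf_nonneg
    rintro x ⟨_, _, rfl⟩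
    exact Real.sqrt_nonneg _
  have h1 : sigmaMin V ≤ Real.sqrt (∑ i, (V.mulVec (r⁻¹ • u)) i ^ 2) := by
    refine csInf_le ⟨0, ?_⟩ ⟨r⁻¹ • u, ?_, rfl⟩
    · rintro x ⟨_, _, rfl⟩
      exact Real.sqrt_nonneg _
    · simp only [Pi.smul_apply, smul_eq_mul, mul_pow]
      rw [← Finset.mul_sum, ← hr2]
      field_simp
  have h2 : sigmaMin V ^ 2 ≤ ∑ i, (V.mulVec (r⁻¹ • u)) i ^ 2 := by
    have := pow_le_pow_left₀ h0 h1 2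
    rwa [Real.sq_sqrt (Finset.sum_nonneg fun _ _ => sq_nonneg _)] at this
  rw [Matrix.mulVec_smul] at h2
  simp only [Pi.smul_apply, smul_eq_mul, mul_pow] at h2
  rw [← Finset.mul_sum] at h2
  rw [← hr2]
  calc sigmaMin V ^ 2 * r ^ 2 ≤ (r⁻¹ ^ 2 * ∑ i, (V.mulVec u) i ^ 2) * r ^ 2 := by gcongr
    _ = _ := by field_simp

/-- lower bound on the target generalization error of a one-hidden layer
neural network with fixed hidden-to-output layer `V`. -/
theorem nn_generalization_error_fixed_output
    (d k l : ℕ) (hd : 1 ≤ d) (hk : 1 ≤ k) (hl : 1 ≤ l) (σ : ℝ) (hσ : 0 < σ)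
    (SigT A : Matrix (Fin d) (Fin d) ℝ)
    (hSigT : SigT.PosSemidef) (hA : A * Aᵀ = SigT)
    (V : Matrix (Fin k) (Fin l) ℝ)
    (WT Wh : Matrix (Fin l) (Fin d) ℝ) :
    (∫ p : (Fin d → ℝ) × (Fin k → ℝ),
        (∑ i, (V.mulVec (fun j => relu (Wh.mulVec (A.mulVec p.1) j)) i -
               (V.mulVec (fun j => relu (WT.mulVec (A.mulVec p.1) j)) i + p.2 i)) ^ 2)
      ∂((Measure.pi fun _ : Fin d => gaussianReal 0 1).prod
          (Measure.pi fun _ : Fin k => gaussianReal 0 ⟨σ ^ 2, sq_nonneg σ⟩))) ≥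
      (1 / 4) * sigmaMin V ^ 2 * ((Wh - WT) * SigT * (Wh - WT)ᵀ).trace + k * σ ^ 2 := by
  set μ := (Measure.pi fun _ : Fin d => gaussianReal 0 1) with hμ
  set v : NNReal := ⟨σ ^ 2, sq_nonneg σ⟩ with hv
  set ν := (Measure.pi fun _ : Fin k => gaussianReal 0 v) with hν
  set D : (Fin d → ℝ) → Fin l → ℝ := fun z j =>
    relu (∑ i, (Wh * A) j i * z i) - relu (∑ i, (WT * A) j i * z i) with hD
  have hDm : ∀ j, MemLp (fun z => D z j) 2 μ := fun j =>
    (relu_comp_memLp (gauss_lin_memLp 1 _)).sub (relu_comp_memLp (gauss_lin_memLp 1 _))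
  have hGm : ∀ i, MemLp (fun z => V.mulVec (D z) i) 2 μ := by
    intro i
    simp only [Matrix.mulVec, dotProduct]
    exact memLp_finsetSum _ fun j _ => (hDm j).const_mul (V i j)
  have hF : ∀ p : (Fin d → ℝ) × (Fin k → ℝ),
      (∑ i, (V.mulVec (fun j => relu (Wh.mulVec (A.mulVec p.1) j)) i -
               (V.mulVec (fun j => relu (WT.mulVec (A.mulVec p.1) j)) i + p.2 i)) ^ 2)
      = ∑ i, ((V.mulVec (D p.1) i) ^ 2 - 2 * (V.mulVec (D p.1) i * p.2 i) + p.2 i ^ 2) := by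
    intro p
    refine Finset.sum_congr rfl fun i _ => ?_
    have : V.mulVec (D p.1) i = V.mulVec (fun j => relu (Wh.mulVec (A.mulVec p.1) j)) i -
        V.mulVec (fun j => relu (WT.mulVec (A.mulVec p.1) j)) i := by
      rw [← Pi.sub_apply, ← Matrix.mulVec_sub]
      simp only [Matrix.mulVec_mulVec]
      rfl
    rw [this]
    ring
  simp only [hF]
  have I1 : ∀ i, Integrable (fun p : (Fin d → ℝ) × (Fin k → ℝ) => (V.mulVec (D p.1) i) ^ 2)
      (μ.prod ν) := fun i => (hGm i).integrable_sq.comp_fst ν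
  have I2 : ∀ i, Integrable (fun p : (Fin d → ℝ) × (Fin k → ℝ) =>
      2 * (V.mulVec (D p.1) i * p.2 i)) (μ.prod ν) := fun i =>
    (((hGm i).integrable (by norm_num)).mul_prod
      ((gauss_memLp v i).integrable (by norm_num))).const_mul 2
  have I3 : ∀ i, Integrable (fun p : (Fin d → ℝ) × (Fin k → ℝ) => p.2 i ^ 2)
      (μ.prod ν) := fun i => (gauss_memLp v i).integrable_sq.comp_snd μ
  have I12 : ∀ i, Integrable (fun p : (Fin d → ℝ) × (Fin k → ℝ) =>
      (V.mulVec (D p.1) i) ^ 2 - 2 * (V.mulVec (D p.1) i * p.2 i)) (μ.prod ν) := fun i =>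
    (I1 i).sub (I2 i)
  have I123 : ∀ i, Integrable (fun p : (Fin d → ℝ) × (Fin k → ℝ) =>
      (V.mulVec (D p.1) i) ^ 2 - 2 * (V.mulVec (D p.1) i * p.2 i) + p.2 i ^ 2) (μ.prod ν) :=
    fun i => (I12 i).add (I3 i)
  have hvc : (v : ℝ) = σ ^ 2 := rfl
  have E : ∀ i, ∫ p : (Fin d → ℝ) × (Fin k → ℝ),
      ((V.mulVec (D p.1) i) ^ 2 - 2 * (V.mulVec (D p.1) i * p.2 i) + p.2 i ^ 2) ∂(μ.prod ν)
      = ∫ z, (V.mulVec (D z) i) ^ 2 ∂μ + σ ^ 2 := by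
    intro i
    rw [integral_add (I12 i) (I3 i), integral_sub (I1 i) (I2 i), integral_const_mul,
      integral_prod_mul (fun z => V.mulVec (D z) i) (fun w : Fin k → ℝ => w i),
      gauss_mean, integral_fun_fst (fun z => (V.mulVec (D z) i) ^ 2),
      integral_fun_snd (fun w : Fin k → ℝ => w i ^ 2), gauss_coord_sq, hvc]
    simp
  rw [integral_finsetSum _ fun i _ => I123 i]
  simp only [E]
  rw [Finset.sum_add_distrib, ← integral_finsetSum _ fun i _ => (hGm i).integrable_sq]
  simp only [Finset.sum_const, Finset.card_univ, Fintype.card_fin, nsmul_eq_mul]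
  have hB : sigmaMin V ^ 2 * ∑ j, ∫ z, D z j ^ 2 ∂μ ≤
      ∫ z, ∑ i, (V.mulVec (D z) i) ^ 2 ∂μ := by
    rw [← integral_finsetSum _ fun j _ => (hDm j).integrable_sq, ← integral_const_mul]
    exact integral_mono ((integrable_finsetSum _ fun j _ => (hDm j).integrable_sq).const_mul _)
      (integrable_finsetSum _ fun i _ => (hGm i).integrable_sq)
      fun z => sigmaMin_sq_le V (D z)
  have hC : (1 / 4) * ((Wh - WT) * SigT * (Wh - WT)ᵀ).trace ≤ ∑ j, ∫ z, D z j ^ 2 ∂μ := by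
    have e : ((Wh - WT) * SigT * (Wh - WT)ᵀ).trace
        = ∑ j, ∑ i, ((Wh * A) j i - (WT * A) j i) ^ 2 := by
      have : (Wh - WT) * SigT * (Wh - WT)ᵀ = (Wh * A - WT * A) * (Wh * A - WT * A)ᵀ := by
        rw [← hA, ← Matrix.sub_mul, Matrix.transpose_mul]
        simp only [Matrix.mul_assoc]
      rw [this]
      simp only [Matrix.trace, Matrix.diag, Matrix.mul_apply (M := Wh * A - WT * A),
        Matrix.transpose_apply, Matrix.sub_apply, pow_two]
    rw [e, Finset.mul_sum]
    exact Finset.sum_le_sum fun j _ => relu_gap _ _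
  have := mul_le_mul_of_nonneg_left hC (sq_nonneg (sigmaMin V))
  linarith
end

section
/- Let d ≥ 1, let z be a standard Gaussian vector in ℝ^d, and let a, b ∈ ℝ^d be nonzero vectors with γ := ⟨a, b⟩ / (‖a‖ ‖b‖). Then 2 E[φ(⟨a, z⟩) φ(⟨b, z⟩)] = ‖a‖ ‖b‖ · (√(1 − γ²) + (π − arccos(γ)) γ) / π. -/
open MeasureTheory ProbabilityTheory

lemma aux_charFunDual_gauss (L : StrongDual ℝ ℝ) :
    charFunDual (gaussianReal 0 1) L = Complex.exp (((-(L 1) ^ 2 / 2 : ℝ)) : ℂ) := by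
  have h := charFun_gaussianReal (μ := 0) (v := 1) (L 1)
  rw [charFun_apply_real] at h
  rw [charFunDual_apply]
  have : ∀ x : ℝ, L x = L 1 * x := by
    intro x
    have := L.map_smul x (1 : ℝ)
    simp only [smul_eq_mul, mul_one] at this
    rw [this, mul_comm]
  have h2 : (fun x : ℝ => Complex.exp ((L x : ℂ) * Complex.I)) =
      fun x : ℝ => Complex.exp ((L 1 : ℂ) * x * Complex.I) := by
    funext x
    rw [this x]
    push_cast
    rfl
  rw [h2, h]
  congr 1
  push_cast
  ring

lemma aux_law (d : ℕ) (a b : Fin d → ℝ) (A B c s : ℝ)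
    (hA : ∑ i, a i ^ 2 = A ^ 2) (hB : ∑ i, b i ^ 2 = B ^ 2)
    (hab : ∑ i, a i * b i = A * B * c) (hcs : c ^ 2 + s ^ 2 = 1) :
    (Measure.pi fun _ : Fin d => gaussianReal 0 1).map
      (fun z => (∑ i, a i * z i, ∑ i, b i * z i)) =
    ((gaussianReal 0 1).prod (gaussianReal 0 1)).map
      (fun p : ℝ × ℝ => (A * p.1, B * (c * p.1 + s * p.2))) := by
  classical
  let F (a : Fin d → ℝ) : (Fin d → ℝ) →L[ℝ] ℝ :=
    ∑ i, a i • ContinuousLinearMap.proj (R := ℝ) (φ := fun _ : Fin d => ℝ) i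
  have hF : ∀ a z, F a z = ∑ i, a i * z i := by
    intro a z; simp [F]
  let G : ℝ × ℝ →L[ℝ] ℝ × ℝ :=
    (A • ContinuousLinearMap.fst ℝ ℝ ℝ).prod
      (B • (c • ContinuousLinearMap.fst ℝ ℝ ℝ + s • ContinuousLinearMap.snd ℝ ℝ ℝ))
  have e1 : (fun z : Fin d → ℝ => (∑ i, a i * z i, ∑ i, b i * z i)) = ⇑((F a).prod (F b)) := by
    ext z <;> simp [hF]
  have e2 : (fun p : ℝ × ℝ => (A * p.1, B * (c * p.1 + s * p.2))) = ⇑G := by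
    ext p <;> simp [G, mul_add]
  rw [e1, e2]
  have : IsFiniteMeasure ((Measure.pi fun _ : Fin d => gaussianReal 0 1).map ⇑((F a).prod (F b))) :=
    inferInstance
  refine Measure.ext_of_charFunDual ?_
  ext L
  rw [charFunDual_map, charFunDual_map, charFunDual_pi, charFunDual_prod]
  simp_rw [aux_charFunDual_gauss]
  rw [← Complex.exp_sum, ← Complex.exp_add, ← Complex.ofReal_sum, ← Complex.ofReal_add]
  congr 2
  have hL : ∀ x y : ℝ, L (x, y) = x * L (1, 0) + y * L (0, 1) := by
    intro x y
    have : ((x, y) : ℝ × ℝ) = x • ((1 : ℝ), (0 : ℝ)) + y • ((0 : ℝ), (1 : ℝ)) := by simp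
    rw [this, map_add, map_smul, map_smul]; simp
  have h1 : ∀ i, (L ∘SL ((F a).prod (F b)) ∘SL ContinuousLinearMap.single ℝ (fun _ => ℝ) i) 1
      = a i * L (1, 0) + b i * L (0, 1) := by
    intro i
    have : ∀ a, F a (Pi.single i 1) = a i := by
      intro a; simp [hF, Pi.single_apply]
    simp only [ContinuousLinearMap.comp_apply, ContinuousLinearMap.single_apply,
      ContinuousLinearMap.prod_apply, this]
    exact hL _ _
  have h2 : (L ∘SL G ∘SL ContinuousLinearMap.inl ℝ ℝ ℝ) 1 = A * L (1, 0) + B * c * L (0, 1) := by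
    simp [G]; rw [hL]
  have h3 : (L ∘SL G ∘SL ContinuousLinearMap.inr ℝ ℝ ℝ) 1 = B * s * L (0, 1) := by
    simp [G]; rw [hL]; ring
  simp only [← ContinuousLinearMap.comp_assoc] at h1 h2 h3
  simp only [h1, h2, h3] 
  generalize L (1, 0) = u
  generalize L (0, 1) = v
  have : ∀ i, -(a i * u + b i * v) ^ 2 / 2 =
      a i ^ 2 * (-u ^ 2 / 2) + b i ^ 2 * (-v ^ 2 / 2) + a i * b i * (-(u * v)) := by
    intro i; ring
  simp_rw [this]
  rw [Finset.sum_add_distrib, Finset.sum_add_distrib, ← Finset.sum_mul, ← Finset.sum_mul,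
    ← Finset.sum_mul, hA, hB, hab]
  linear_combination (B ^ 2 * v ^ 2 / 2) * hcs

lemma aux_angle (θ : ℝ) (h0 : 0 ≤ θ) (h1 : θ ≤ Real.pi) :
    ∫ x in Set.Ioo (-Real.pi) Real.pi, relu (Real.cos x) * relu (Real.cos (x - θ)) =
      ((Real.pi - θ) * Real.cos θ + Real.sin θ) / 2 := by
  have hpi := Real.pi_pos
  rw [setIntegral_eq_of_subset_of_forall_sdiff_eq_zero (s := Set.Ioc (θ - Real.pi / 2) (Real.pi / 2))
    measurableSet_Ioo]
  · have : ∫ x in Set.Ioc (θ - Real.pi / 2) (Real.pi / 2),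
        relu (Real.cos x) * relu (Real.cos (x - θ)) =
        ∫ x in Set.Ioc (θ - Real.pi / 2) (Real.pi / 2),
          (Real.cos θ / 2 + Real.cos (2 * x - θ) / 2) := by
      refine setIntegral_congr_fun measurableSet_Ioc ?_
      intro x hx
      have c1 : 0 ≤ Real.cos x := Real.cos_nonneg_of_neg_pi_div_two_le_of_le
        (by linarith [hx.1]) hx.2
      have c2 : 0 ≤ Real.cos (x - θ) := Real.cos_nonneg_of_neg_pi_div_two_le_of_le
        (by linarith [hx.1]) (by linarith [hx.2])
      simp only [relu, max_eq_left c1, max_eq_left c2]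
      have e1 : θ = x - (x - θ) := by ring
      have e2 : 2 * x - θ = x + (x - θ) := by ring
      rw [e2, Real.cos_add]
      nth_rewrite 2 [e1]
      rw [Real.cos_sub x (x - θ)]
      ring
    rw [this, ← intervalIntegral.integral_of_le (by linarith)]
    have hd : ∀ x ∈ Set.uIcc (θ - Real.pi / 2) (Real.pi / 2),
        HasDerivAt (fun x => Real.cos θ / 2 * x + Real.sin (2 * x - θ) / 4)
          (Real.cos θ / 2 + Real.cos (2 * x - θ) / 2) x := by
      intro x _
      have h := (((hasDerivAt_id x).const_mul 2).sub_const θ).sin.div_const 4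
      have h' := ((hasDerivAt_id x).const_mul (Real.cos θ / 2)).add h
      convert! h' using 1
      simp; ring
    rw [intervalIntegral.integral_eq_sub_of_hasDerivAt hd
      (Continuous.intervalIntegrable (by fun_prop) _ _)]
    have e1 : 2 * (Real.pi / 2) - θ = Real.pi - θ := by ring
    have e2 : 2 * (θ - Real.pi / 2) - θ = -(Real.pi - θ) := by ring
    rw [e1, e2, Real.sin_neg, Real.sin_pi_sub]
    ring
  · intro x hx
    exact ⟨by linarith [hx.1], by linarith [hx.2]⟩
  · rintro x ⟨hx, hx'⟩
    simp only [relu]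
    by_cases h : x ≤ θ - Real.pi / 2
    · by_cases h2 : -(Real.pi / 2) ≤ x
      · have : Real.cos (x - θ) ≤ 0 := by
          rw [← Real.cos_neg]
          exact Real.cos_nonpos_of_pi_div_two_le_of_le (by linarith) (by linarith)
        rw [max_eq_right this, mul_zero]
      · have : Real.cos x ≤ 0 := by
          rw [← Real.cos_neg]
          exact Real.cos_nonpos_of_pi_div_two_le_of_le (by linarith) (by linarith [hx.1])
        rw [max_eq_right this, zero_mul]
    · have : Real.pi / 2 < x := by
        by_contra h3
        exact hx' ⟨not_le.1 h, not_lt.1 h3⟩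
      have : Real.cos x ≤ 0 := 
          Real.cos_nonpos_of_pi_div_two_le_of_le (by linarith) (by linarith [hx.2])
      rw [max_eq_right this, zero_mul]

lemma aux_radial : ∫ r in Set.Ioi (0 : ℝ), r ^ 3 * Real.exp (-r ^ 2 / 2) = 2 := by
  have h := integral_rpow_mul_exp_neg_mul_rpow (p := 2) (q := 3) (b := 1 / 2)
    (by norm_num) (by norm_num) (by norm_num)
  have e : ∀ r : ℝ, r ^ 3 * Real.exp (-r ^ 2 / 2) =
      r ^ (3 : ℝ) * Real.exp (-(1 / 2) * r ^ (2 : ℝ)) := by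
    intro r
    rw [show (3 : ℝ) = ((3 : ℕ) : ℝ) by norm_num, show (2 : ℝ) = ((2 : ℕ) : ℝ) by norm_num,
      Real.rpow_natCast, Real.rpow_natCast]
    congr 2
    push_cast; ring
  simp_rw [e]
  rw [h, show (-(3 + 1) / 2 : ℝ) = -((2 : ℕ) : ℝ) by norm_num, Real.rpow_neg (by norm_num),
    Real.rpow_natCast, show ((3 + 1) / 2 : ℝ) = 2 by norm_num, Real.Gamma_two]
  norm_num

lemma relu_mul (r t : ℝ) (hr : 0 ≤ r) : relu (r * t) = r * relu t := by
  simp [relu, mul_max_of_nonneg _ _ hr]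

lemma aux_plane (θ : ℝ) (h0 : 0 ≤ θ) (h1 : θ ≤ Real.pi) :
    ∫ p : ℝ × ℝ, relu p.1 * relu (Real.cos θ * p.1 + Real.sin θ * p.2)
      ∂((gaussianReal 0 1).prod (gaussianReal 0 1)) =
      ((Real.pi - θ) * Real.cos θ + Real.sin θ) / (2 * Real.pi) := by
  have hpi := Real.pi_pos
  rw [gaussianReal_of_var_ne_zero 0 one_ne_zero,
    prod_withDensity (measurable_gaussianPDF _ _) (measurable_gaussianPDF _ _),
    integral_withDensity_eq_integral_toReal_smul (by fun_prop)
      (ae_of_all _ fun x => ENNReal.mul_lt_top gaussianPDF_lt_top gaussianPDF_lt_top)]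
  change ∫ p : ℝ × ℝ, _ = _
  rw [← integral_comp_polarCoord_symm, polarCoord_target]
  have : ∀ p ∈ Set.Ioi (0 : ℝ) ×ˢ Set.Ioo (-Real.pi) Real.pi,
      (p.1 • (gaussianPDF 0 1 (polarCoord.symm p).1 * gaussianPDF 0 1 (polarCoord.symm p).2).toReal •
        (relu (polarCoord.symm p).1 * relu (Real.cos θ * (polarCoord.symm p).1 +
          Real.sin θ * (polarCoord.symm p).2))) =
      (fun r => (2 * Real.pi)⁻¹ * (r ^ 3 * Real.exp (-r ^ 2 / 2))) p.1 *
        (fun x => relu (Real.cos x) * relu (Real.cos (x - θ))) p.2 := by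
    rintro ⟨r, x⟩ ⟨hr, -⟩
    have hr : 0 ≤ r := le_of_lt hr
    simp only [polarCoord_symm_apply, smul_eq_mul, ENNReal.toReal_mul, toReal_gaussianPDF]
    have e1 : Real.cos θ * (r * Real.cos x) + Real.sin θ * (r * Real.sin x) =
        r * Real.cos (x - θ) := by rw [Real.cos_sub]; ring
    rw [e1, relu_mul _ _ hr, relu_mul _ _ hr]
    have e2 : gaussianPDFReal 0 1 (r * Real.cos x) * gaussianPDFReal 0 1 (r * Real.sin x) =
        (2 * Real.pi)⁻¹ * Real.exp (-r ^ 2 / 2) := by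
      simp only [gaussianPDFReal_def]
      rw [mul_mul_mul_comm, ← Real.exp_add, ← mul_inv,
        Real.mul_self_sqrt (by positivity)]
      congr 2
      · simp
      · simp only [NNReal.coe_one]
        linear_combination (-r ^ 2 / 2) * Real.sin_sq_add_cos_sq x
    rw [e2]
    ring
  rw [setIntegral_congr_fun (measurableSet_Ioi.prod measurableSet_Ioo) this]
  rw [Measure.volume_eq_prod]
  refine (setIntegral_prod_mul (fun r : ℝ => (2 * Real.pi)⁻¹ * (r ^ 3 * Real.exp (-r ^ 2 / 2)))
    (fun x : ℝ => relu (Real.cos x) * relu (Real.cos (x - θ))) _ _).trans ?_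
  rw [aux_angle θ h0 h1, integral_const_mul,
    aux_radial]
  field_simp

/-- correlation of two rectified Gaussian linear forms. -/
theorem relu_cross_moment (d : ℕ) (hd : 1 ≤ d) (a b : Fin d → ℝ)
    (ha : a ≠ 0) (hb : b ≠ 0) (γ : ℝ)
    (hγ : γ = (∑ i, a i * b i) /
      (Real.sqrt (∑ i, a i ^ 2) * Real.sqrt (∑ i, b i ^ 2))) :
    2 * (∫ z : Fin d → ℝ, relu (∑ i, a i * z i) * relu (∑ i, b i * z i)
        ∂(Measure.pi fun _ : Fin d => gaussianReal 0 1)) =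
      Real.sqrt (∑ i, a i ^ 2) * Real.sqrt (∑ i, b i ^ 2) *
        ((Real.sqrt (1 - γ ^ 2) + (Real.pi - Real.arccos γ) * γ) / Real.pi) := by
  have hpos : ∀ a : Fin d → ℝ, a ≠ 0 → 0 < ∑ i, a i ^ 2 := by
    intro a ha
    obtain ⟨i, hi⟩ := Function.ne_iff.1 ha
    exact Finset.sum_pos' (fun i _ => sq_nonneg _)
      ⟨i, Finset.mem_univ _, by have : a i ≠ 0 := hi; positivity⟩
  have hA2 := Real.sq_sqrt (hpos a ha).le
  have hB2 := Real.sq_sqrt (hpos b hb).le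
  have hA := Real.sqrt_pos.2 (hpos a ha)
  have hB := Real.sqrt_pos.2 (hpos b hb)
  have hCS := Finset.sum_mul_sq_le_sq_mul_sq Finset.univ a b
  generalize √(∑ i, a i ^ 2) = A at *
  generalize √(∑ i, b i ^ 2) = B at *
  have hab : ∑ i, a i * b i = A * B * γ := by
    rw [hγ]; field_simp
  have hγ2 : γ ^ 2 ≤ 1 := by
    rw [← hA2, ← hB2, hab] at hCS
    have h : 0 < A ^ 2 * B ^ 2 := by positivity
    nlinarith
  have hγ1 := abs_le_one_iff_mul_self_le_one.2 (by nlinarith : γ * γ ≤ 1)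
  obtain ⟨hl, hu⟩ := abs_le.1 hγ1
  have hcos := Real.cos_arccos hl hu
  have hsin := Real.sin_arccos γ
  have hlaw := aux_law d a b A B (Real.cos (Real.arccos γ)) (Real.sin (Real.arccos γ))
    hA2.symm hB2.symm (by rw [hcos, hab]) (Real.cos_sq_add_sin_sq _)
  have hrel : Continuous relu := by unfold relu; fun_prop
  have hcont : Continuous (fun q : ℝ × ℝ => relu q.1 * relu q.2) := by fun_prop
  have i1 := integral_map (μ := Measure.pi fun _ : Fin d => gaussianReal 0 1)
    (φ := fun z => (∑ i, a i * z i, ∑ i, b i * z i))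
    (f := fun q : ℝ × ℝ => relu q.1 * relu q.2) (by fun_prop) hcont.aestronglyMeasurable
  have i2 := integral_map (μ := (gaussianReal 0 1).prod (gaussianReal 0 1))
    (φ := fun p : ℝ × ℝ => (A * p.1,
      B * (Real.cos (Real.arccos γ) * p.1 + Real.sin (Real.arccos γ) * p.2)))
    (f := fun q : ℝ × ℝ => relu q.1 * relu q.2) (by fun_prop) hcont.aestronglyMeasurable
  rw [hlaw, i2] at i1
  simp only [relu_mul _ _ hA.le, relu_mul _ _ hB.le] at i1
  rw [← i1]
  have e : ∀ p : ℝ × ℝ, A * relu p.1 * (B * relu (Real.cos (Real.arccos γ) * p.1 +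
      Real.sin (Real.arccos γ) * p.2)) = A * B * (relu p.1 * relu (Real.cos (Real.arccos γ) * p.1 +
      Real.sin (Real.arccos γ) * p.2)) := fun p => by ring
  simp_rw [e]
  rw [integral_const_mul, aux_plane _ (Real.arccos_nonneg _) (Real.arccos_le_pi _), hcos, hsin]
  have := Real.pi_pos
  field_simp
  ring
end

section
/- Let d ≥ 1, let z be a standard Gaussian vector in ℝ^d, and let a, b ∈ ℝ^d be arbitrary vectors (possibly zero). Then E[|φ(⟨a, z⟩) − φ(⟨b, z⟩)|²] ≥ (1/4) ‖a − b‖². -/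
open MeasureTheory ProbabilityTheory

lemma relu_aux_neg (d : ℕ) : MeasurePreserving (fun z : Fin d → ℝ => fun i => -(z i))
    (Measure.pi fun _ : Fin d => gaussianReal 0 1)
    (Measure.pi fun _ : Fin d => gaussianReal 0 1) := by
  refine measurePreserving_pi (f := fun _ (x : ℝ) => -x) _ _ (fun i => ⟨measurable_neg, ?_⟩)
  simpa using gaussianReal_map_neg (μ := 0) (v := 1)

lemma relu_aux_int_neg (d : ℕ) (f : (Fin d → ℝ) → ℝ) :
    ∫ z, f (fun i => -(z i)) ∂(Measure.pi fun _ : Fin d => gaussianReal 0 1)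
      = ∫ z, f z ∂(Measure.pi fun _ : Fin d => gaussianReal 0 1) :=
  (relu_aux_neg d).integral_comp
    (MeasurableEquiv.neg (Fin d → ℝ)).measurableEmbedding f

lemma relu_aux_memLp (d : ℕ) (c : Fin d → ℝ) :
    MemLp (fun z : Fin d → ℝ => ∑ i, c i * z i) 2
      (Measure.pi fun _ : Fin d => gaussianReal 0 1) := by
  refine memLp_finset_sum _ (fun i _ => MemLp.const_mul ?_ _)
  exact (memLp_id_gaussianReal (μ := 0) (v := 1) 2).comp_measurePreserving
    (measurePreserving_eval (fun _ : Fin d => gaussianReal 0 1) i)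

lemma relu_aux_sq (d : ℕ) (c : Fin d → ℝ) :
    ∫ z : Fin d → ℝ, (∑ i, c i * z i) ^ 2 ∂(Measure.pi fun _ : Fin d => gaussianReal 0 1)
      = ∑ i, c i ^ 2 := by
  have h0 := relu_aux_int_neg d (fun z => ∑ i, c i * z i)
  simp only [mul_neg, Finset.sum_neg_distrib, integral_neg] at h0
  have h1 := variance_of_integral_eq_zero (relu_aux_memLp d c).aemeasurable (by linarith)
  rw [← h1]
  have h2 := variance_sum_pi (μ := fun _ : Fin d => gaussianReal 0 1)
    (X := fun i x => c i * x)
    (fun i => (memLp_id_gaussianReal (μ := 0) (v := 1) 2).const_mul (c i))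
  have h3 : (∑ i, fun ω : Fin d → ℝ => c i * ω i) = fun z => ∑ i, c i * z i := by
    ext z; simp
  rw [h3] at h2
  rw [h2]
  refine Finset.sum_congr rfl fun i _ => ?_
  rw [variance_const_mul]
  simp

lemma relu_aux_integrable (d : ℕ) (a b : Fin d → ℝ) :
    Integrable (fun z : Fin d → ℝ => (relu (∑ i, a i * z i) - relu (∑ i, b i * z i)) ^ 2)
      (Measure.pi fun _ : Fin d => gaussianReal 0 1) := by
  have h (c : Fin d → ℝ) : MemLp (fun z : Fin d → ℝ => relu (∑ i, c i * z i)) 2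
      (Measure.pi fun _ : Fin d => gaussianReal 0 1) := by
    refine (relu_aux_memLp d c).mono ?_ (Filter.Eventually.of_forall fun z => ?_)
    · unfold relu
      exact Measurable.aestronglyMeasurable (by fun_prop)
    · unfold relu
      simp only [Real.norm_eq_abs]
      rw [abs_of_nonneg (le_max_right _ _)]
      exact max_le (le_abs_self _) (abs_nonneg _)
  exact ((h a).sub (h b)).integrable_sq

lemma relu_aux_pointwise (x y : ℝ) :
    (1 / 2) * (x - y) ^ 2 ≤ (relu x - relu y) ^ 2 + (relu (-x) - relu (-y)) ^ 2 := by
  have hx : x = relu x - relu (-x) := by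
    unfold relu; rcases le_total x 0 with h | h <;> simp [h]
  have hy : y = relu y - relu (-y) := by
    unfold relu; rcases le_total y 0 with h | h <;> simp [h]
  have : x - y = (relu x - relu y) - (relu (-x) - relu (-y)) := by linarith
  rw [this]
  nlinarith [sq_nonneg ((relu x - relu y) + (relu (-x) - relu (-y)))]

/-- lower bound for the second moment of the difference of two rectified
Gaussian linear forms. -/
theorem relu_diff_sq_moment_lower (d : ℕ) (hd : 1 ≤ d) (a b : Fin d → ℝ) :
    (∫ z : Fin d → ℝ, (relu (∑ i, a i * z i) - relu (∑ i, b i * z i)) ^ 2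
        ∂(Measure.pi fun _ : Fin d => gaussianReal 0 1)) ≥
      (1 / 4) * (∑ i, (a i - b i) ^ 2) := by
  have hI := relu_aux_integrable d a b
  have hI' := (relu_aux_neg d).integrable_comp_of_integrable hI
  have hN := relu_aux_int_neg d
    (fun z => (relu (∑ i, a i * z i) - relu (∑ i, b i * z i)) ^ 2)
  have hS := relu_aux_sq d (fun i => a i - b i)
  have hM := (relu_aux_memLp d (fun i => a i - b i)).integrable_sq
  have key := integral_mono (hM.const_mul (1 / 2)) (hI.add hI') (fun z => by
    have := relu_aux_pointwise (∑ i, a i * z i) (∑ i, b i * z i)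
    simpa [sub_mul, Finset.sum_sub_distrib] using this)
  rw [integral_const_mul, hS, integral_add' hI hI'] at key
  simp only [Function.comp_def] at key
  rw [hN] at key
  linarith
end

section
/- Let a, b ∈ ℝ^d be nonzero vectors and set γ := ⟨a, b⟩ / (‖a‖ ‖b‖). Then (1/2) ‖a − b‖² − ‖a‖ ‖b‖ · (√(1 − γ²) − γ arccos(γ)) / π ≥ (1/4) ‖a − b‖². -/
lemma aux_small (t : ℝ) (h0 : 0 ≤ t) (h1 : t ≤ Real.pi / 2) :
    2 * (Real.sin t - t * Real.cos t) ≤ Real.pi * (1 - Real.cos t) := by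
  have hs := Real.sin_le h0
  have hc := Real.cos_le_one t
  nlinarith [mul_nonneg (sub_nonneg.2 h1) (sub_nonneg.2 hc)]

lemma aux_all (t : ℝ) (h0 : 0 ≤ t) (h1 : t ≤ Real.pi) :
    2 * (Real.sin t - t * Real.cos t) ≤ Real.pi * (1 - Real.cos t) := by
  rcases le_total t (Real.pi / 2) with h | h
  · exact aux_small t h0 h
  · have := aux_small (Real.pi - t) (by linarith) (by linarith)
    rw [Real.sin_pi_sub, Real.cos_pi_sub] at this
    nlinarith

/-- the key deterministic inequality comparing the ReLU kernel expression
with a quarter of the squared Euclidean distance. -/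
theorem relu_kernel_quarter_bound (d : ℕ) (a b : Fin d → ℝ)
    (ha : a ≠ 0) (hb : b ≠ 0) (γ : ℝ)
    (hγ : γ = (∑ i, a i * b i) /
      (Real.sqrt (∑ i, a i ^ 2) * Real.sqrt (∑ i, b i ^ 2))) :
    (1 / 2) * (∑ i, (a i - b i) ^ 2) -
        Real.sqrt (∑ i, a i ^ 2) * Real.sqrt (∑ i, b i ^ 2) *
          ((Real.sqrt (1 - γ ^ 2) - γ * Real.arccos γ) / Real.pi) ≥
      (1 / 4) * (∑ i, (a i - b i) ^ 2) := by
  have pos : ∀ v : Fin d → ℝ, v ≠ 0 → 0 < ∑ i, v i ^ 2 := by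
    intro v hv
    obtain ⟨j, hj⟩ := Function.ne_iff.1 hv
    exact Finset.sum_pos' (fun i _ => sq_nonneg _)
      ⟨j, Finset.mem_univ _, by have : v j ≠ 0 := hj
                                positivity⟩
  have hA := Real.sqrt_pos.2 (pos a ha)
  have hB := Real.sqrt_pos.2 (pos b hb)
  have hA2 := Real.sq_sqrt (pos a ha).le
  have hB2 := Real.sq_sqrt (pos b hb).le
  have hCS := Finset.sum_mul_sq_le_sq_mul_sq Finset.univ a b
  have hexp : ∑ i, (a i - b i) ^ 2
      = ∑ i, a i ^ 2 - 2 * ∑ i, a i * b i + ∑ i, b i ^ 2 := by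
    rw [Finset.mul_sum, ← Finset.sum_sub_distrib, ← Finset.sum_add_distrib]
    exact Finset.sum_congr rfl fun i _ => by ring
  rw [hexp]
  rw [← hA2, ← hB2] at hCS
  set A := Real.sqrt (∑ i, a i ^ 2)
  set B := Real.sqrt (∑ i, b i ^ 2)
  set S := ∑ i, a i * b i
  rw [← hA2, ← hB2]
  have hAB : 0 < A * B := mul_pos hA hB
  have hS : S = A * B * γ := by rw [hγ]; field_simp
  have hle : |S| ≤ A * B := abs_le_of_sq_le_sq (by nlinarith) hAB.le
  obtain ⟨hl, hu⟩ := abs_le.1 hle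
  have h1 : -1 ≤ γ := by rw [hγ, le_div_iff₀ hAB]; linarith
  have h2 : γ ≤ 1 := by rw [hγ, div_le_iff₀ hAB]; linarith
  have key := aux_all (Real.arccos γ) (Real.arccos_nonneg γ) (Real.arccos_le_pi γ)
  rw [Real.sin_arccos, Real.cos_arccos h1 h2] at key
  have hq : (Real.sqrt (1 - γ ^ 2) - γ * Real.arccos γ) / Real.pi ≤ (1 - γ) / 2 := by
    rw [div_le_iff₀ Real.pi_pos]; linarith
  have hm := mul_le_mul_of_nonneg_left hq hAB.le
  rw [hS]
  nlinarith [sq_nonneg (A - B)]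
end

section
/- Let d, k, ℓ ≥ 1, σ > 0, let V ∈ ℝ^{k×ℓ}, let Σ_S ∈ ℝ^{d×d} be positive semidefinite and let A ∈ ℝ^{d×d} satisfy A Aᵀ = Σ_S. For W ∈ ℝ^{ℓ×d}, let P_W denote the law on ℝ^d × ℝ^k of the pair (A z, V φ(W A z) + σ w), where (z, w) is a standard Gaussian vector in ℝ^{d+k}. Then for any W₁, W₂ ∈ ℝ^{ℓ×d}, D_KL(P_{W₁} ‖ P_{W₂}) ≤ ‖V‖_op² · trace((W₁ − W₂) Σ_S (W₁ − W₂)ᵀ) / (2σ²). -/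
open MeasureTheory ProbabilityTheory Matrix

/-- The Kullback–Leibler divergence (in nats) of `P` with respect to `Q`, given by
`∫ log (dP/dQ) dP` (meaningful when `P ≪ Q`). -/
noncomputable def klDivR {α : Type*} [MeasurableSpace α] (P Q : Measure α) : ℝ :=
  ∫ x, Real.log (P.rnDeriv Q x).toReal ∂P

/-- The operator (spectral) norm of a matrix: the supremum of `‖M u‖` over
Euclidean-unit vectors `u`. -/
noncomputable def opNorm {m n : ℕ} (M : Matrix (Fin m) (Fin n) ℝ) : ℝ :=
  sSup {r : ℝ | ∃ u : Fin n → ℝ, ∑ i, u i ^ 2 = 1 ∧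
    r = Real.sqrt (∑ i, (M.mulVec u) i ^ 2)}

/-- The joint law of `(A z, V φ(W A z) + σ w)` where `(z, w)` is a standard Gaussian
vector in `ℝ^{d+k}`. -/
noncomputable def nnLaw (d k l : ℕ) (σ : ℝ) (V : Matrix (Fin k) (Fin l) ℝ)
    (A : Matrix (Fin d) (Fin d) ℝ) (W : Matrix (Fin l) (Fin d) ℝ) :
    Measure ((Fin d → ℝ) × (Fin k → ℝ)) :=
  Measure.map
    (fun zw : (Fin d → ℝ) × (Fin k → ℝ) =>
      (A.mulVec zw.1,
        V.mulVec (fun j => relu (W.mulVec (A.mulVec zw.1) j)) + σ • zw.2))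
    ((Measure.pi fun _ : Fin d => gaussianReal 0 1).prod
      (Measure.pi fun _ : Fin k => gaussianReal 0 1))

lemma opNorm_bound {m n : ℕ} (M : Matrix (Fin m) (Fin n) ℝ) (u : Fin n → ℝ) :
    ∑ i, (M.mulVec u) i ^ 2 ≤ opNorm M ^ 2 * ∑ i, u i ^ 2 := by
  have hCS : ∀ u : Fin n → ℝ, ∑ i, (M.mulVec u) i ^ 2 ≤ (∑ i, ∑ j, M i j ^ 2) * ∑ j, u j ^ 2 := by
    intro u
    rw [Finset.sum_mul]
    refine Finset.sum_le_sum fun i _ => ?_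
    exact Finset.sum_mul_sq_le_sq_mul_sq Finset.univ (M i) u
  have hbdd : BddAbove {r : ℝ | ∃ u : Fin n → ℝ, ∑ i, u i ^ 2 = 1 ∧
    r = Real.sqrt (∑ i, (M.mulVec u) i ^ 2)} := by
    refine ⟨Real.sqrt (∑ i, ∑ j, M i j ^ 2), ?_⟩
    rintro r ⟨u, hu, rfl⟩
    apply Real.sqrt_le_sqrt
    simpa [hu] using hCS u
  have hs0 : 0 ≤ ∑ i, u i ^ 2 := Finset.sum_nonneg fun i _ => sq_nonneg _
  rcases hs0.eq_or_lt with h0 | hpos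
  · have := hCS u
    rw [← h0] at this ⊢
    simpa using this
  · set s := ∑ i, u i ^ 2 with hs
    have hss : Real.sqrt s ^ 2 = s := Real.sq_sqrt hs0
    have hs' : 0 < Real.sqrt s := Real.sqrt_pos.2 hpos
    have hle := le_csSup hbdd ⟨(Real.sqrt s)⁻¹ • u, by
      simp only [Pi.smul_apply, smul_eq_mul, mul_pow, ← Finset.mul_sum]
      rw [← hs, inv_pow, hss]
      exact inv_mul_cancel₀ hpos.ne', rfl⟩
    change _ ≤ opNorm M at hle
    have h2 := pow_le_pow_left₀ (Real.sqrt_nonneg _) hle 2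
    rw [Real.sq_sqrt (Finset.sum_nonneg fun i _ => sq_nonneg _)] at h2
    simp only [Matrix.mulVec_smul, Pi.smul_apply, smul_eq_mul, mul_pow, ← Finset.mul_sum] at h2
    rw [inv_pow, hss, inv_mul_le_iff₀ hpos] at h2
    linarith

lemma gauss_shift1 (m : ℝ) : (gaussianReal 0 1).map (· + m) =
    (gaussianReal 0 1).withDensity (fun x => ENNReal.ofReal (Real.exp (m * x - m ^ 2 / 2))) := by
  rw [gaussianReal_map_add_const, gaussianReal_of_var_ne_zero _ one_ne_zero,
    gaussianReal_of_var_ne_zero _ one_ne_zero, ← withDensity_mul _ (by fun_prop) (by fun_prop)]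
  congr 1
  ext x
  simp only [gaussianPDF, Pi.mul_apply]
  rw [← ENNReal.ofReal_mul (gaussianPDFReal_nonneg _ _ _)]
  congr 1
  simp only [gaussianPDFReal]
  rw [mul_assoc (√_)⁻¹, ← Real.exp_add]
  congr 2
  simp
  ring

lemma gauss_shift {k : ℕ} (m : Fin k → ℝ) :
    (Measure.pi fun _ : Fin k => gaussianReal 0 1).map (· + m) =
    (Measure.pi fun _ : Fin k => gaussianReal 0 1).withDensity
      (fun x => ENNReal.ofReal (Real.exp (∑ i, (m i * x i - m i ^ 2 / 2)))) := by
  have h1 : (Measure.pi fun _ : Fin k => gaussianReal 0 1).map (· + m) =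
      Measure.pi fun i => (gaussianReal 0 1).map (· + m i) := by
    rw [← Measure.pi_map_pi (fun i => by fun_prop)]
    rfl
  rw [h1]
  refine Measure.pi_eq fun s hs => ?_
  rw [withDensity_apply _ (MeasurableSet.univ_pi hs), ← lintegral_indicator (MeasurableSet.univ_pi hs)]
  have h2 : ∀ w : Fin k → ℝ, (Set.univ.pi s).indicator
      (fun x => ENNReal.ofReal (Real.exp (∑ i, (m i * x i - m i ^ 2 / 2)))) w
      = ∏ i, (s i).indicator (fun x => ENNReal.ofReal (Real.exp (m i * x - m i ^ 2 / 2))) (w i) := by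
    intro w
    by_cases hw : w ∈ Set.univ.pi s
    · rw [Set.indicator_of_mem hw, Real.exp_sum, ENNReal.ofReal_prod_of_nonneg
        (fun i _ => (Real.exp_pos _).le)]
      refine Finset.prod_congr rfl fun i _ => ?_
      rw [Set.indicator_of_mem (hw i (Set.mem_univ _))]
    · rw [Set.indicator_of_notMem hw]
      simp only [Set.mem_univ_pi, not_forall] at hw
      obtain ⟨i, hi⟩ := hw
      exact (Finset.prod_eq_zero (Finset.mem_univ i) (Set.indicator_of_notMem hi _)).symm
  simp_rw [h2]
  have hm : ∀ i, Measurable ((s i).indicator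
      (fun x => ENNReal.ofReal (Real.exp (m i * x - m i ^ 2 / 2)))) := fun i =>
    Measurable.indicator (by fun_prop) (hs i)
  have h3 := lintegral_prod_eq_prod_lintegral_of_indepFun (μ := Measure.pi fun _ : Fin k => gaussianReal 0 1) Finset.univ
    (fun i w => (s i).indicator (fun x => ENNReal.ofReal (Real.exp (m i * x - m i ^ 2 / 2))) (w i))
    (iIndepFun_pi (fun i => (hm i).aemeasurable)) (fun i => (hm i).comp (measurable_pi_apply i))
  rw [h3]
  refine Finset.prod_congr rfl fun i _ => ?_
  rw [(measurePreserving_eval (fun _ : Fin k => gaussianReal 0 1) i).lintegral_comp (hm i),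
    lintegral_indicator (hs i), gauss_shift1, withDensity_apply _ (hs i)]

lemma shift_prod {X : Type*} [MeasurableSpace X] (μ : Measure X) [IsProbabilityMeasure μ] {k : ℕ}
    (g : X → Fin k → ℝ) (hg : Measurable g) :
    (μ.prod (Measure.pi fun _ : Fin k => gaussianReal 0 1)).map (fun p => (p.1, p.2 + g p.1)) =
    (μ.prod (Measure.pi fun _ : Fin k => gaussianReal 0 1)).withDensity
      (fun p => ENNReal.ofReal (Real.exp (∑ i, (g p.1 i * p.2 i - g p.1 i ^ 2 / 2)))) := by
  have hT : Measurable (fun p : X × (Fin k → ℝ) => (p.1, p.2 + g p.1)) := by fun_prop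
  have hD : Measurable (fun p : X × (Fin k → ℝ) =>
      ENNReal.ofReal (Real.exp (∑ i, (g p.1 i * p.2 i - g p.1 i ^ 2 / 2)))) := by fun_prop
  refine Measure.ext_of_lintegral _ fun f hf => ?_
  rw [lintegral_map hf hT, lintegral_withDensity_eq_lintegral_mul _ hD hf,
    lintegral_prod (fun p : X × (Fin k → ℝ) => f (p.1, p.2 + g p.1)) (hf.comp hT).aemeasurable,
    lintegral_prod _ (hD.mul hf).aemeasurable]
  refine lintegral_congr fun x => ?_
  have hfx : Measurable (fun y => f (x, y)) := by fun_prop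
  have := lintegral_map (μ := Measure.pi fun _ : Fin k => gaussianReal 0 1) hfx
    (g := (· + g x)) (by fun_prop)
  rw [← this, gauss_shift, lintegral_withDensity_eq_lintegral_mul _ (by fun_prop) hfx]
  rfl

lemma kl_shift {X : Type*} [MeasurableSpace X] (μ : Measure X) [IsProbabilityMeasure μ] {k : ℕ}
    (g : X → Fin k → ℝ) (hg : Measurable g) (hg2 : ∀ i, MemLp (fun x => g x i) 2 μ)
    (γ ν : Measure (X × (Fin k → ℝ)))
    (hγ : γ = μ.prod (Measure.pi fun _ : Fin k => gaussianReal 0 1))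
    (hν : ν = γ.map (fun p => (p.1, p.2 + g p.1))) :
    ν ≪ γ ∧ Integrable (llr ν γ) ν ∧ ∫ p, llr ν γ p ∂ν = (∫ x, ∑ i, g x i ^ 2 ∂μ) / 2 := by
  have hT : Measurable (fun p : X × (Fin k → ℝ) => (p.1, p.2 + g p.1)) := by fun_prop
  have hpγ : IsProbabilityMeasure γ := by rw [hγ]; infer_instance
  have hh : Measurable (fun p : X × (Fin k → ℝ) => ∑ i, (g p.1 i * p.2 i - g p.1 i ^ 2 / 2)) := by
    fun_prop
  have hden : ν = γ.withDensity
      (fun p => ENNReal.ofReal (Real.exp (∑ i, (g p.1 i * p.2 i - g p.1 i ^ 2 / 2)))) := by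
    rw [hν, hγ, shift_prod μ g hg]
  have hac : ν ≪ γ := by rw [hden]; exact withDensity_absolutelyContinuous _ _
  have hllr : llr ν γ =ᵐ[ν] fun p => ∑ i, (g p.1 i * p.2 i - g p.1 i ^ 2 / 2) := by
    apply hac.ae_eq
    have := Measure.rnDeriv_withDensity γ (hh.exp.ennreal_ofReal)
    rw [← hden] at this
    filter_upwards [this] with p hp
    rw [llr, hp, ENNReal.toReal_ofReal (Real.exp_pos _).le, Real.log_exp]
  have hi1 : ∀ i, Integrable (fun p : X × (Fin k → ℝ) => g p.1 i * p.2 i) γ := by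
    intro i
    rw [hγ]
    exact Integrable.mul_prod (f := fun x => g x i) (g := fun w : Fin k → ℝ => w i)
      ((hg2 i).integrable (by norm_num))
      (integrable_eval (i := i) (IsGaussian.integrable_id))
  have hi2 : ∀ i, Integrable (fun p : X × (Fin k → ℝ) => g p.1 i ^ 2) γ := by
    intro i
    rw [hγ]
    exact ((hg2 i).integrable_sq).comp_fst _
  have hz : ∀ i, ∫ p : X × (Fin k → ℝ), g p.1 i * p.2 i ∂γ = 0 := by
    intro i
    rw [hγ, integral_prod_mul (fun x => g x i) (fun w : Fin k → ℝ => w i)]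
    rw [integral_comp_eval (μ := fun _ : Fin k => gaussianReal 0 1) (i := i) (f := fun x => x)
      (by fun_prop), integral_id_gaussianReal, mul_zero]
  have hsq : ∀ i, ∫ p : X × (Fin k → ℝ), g p.1 i ^ 2 ∂γ = ∫ x, g x i ^ 2 ∂μ := by
    intro i
    rw [hγ, integral_fun_fst (fun x => g x i ^ 2)]
    simp
  have hcomp : (fun p : X × (Fin k → ℝ) => ∑ i, (g p.1 i * p.2 i - g p.1 i ^ 2 / 2)) ∘
      (fun p : X × (Fin k → ℝ) => (p.1, p.2 + g p.1)) =
      fun p => ∑ i, (g p.1 i * p.2 i + g p.1 i ^ 2 / 2) := by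
    ext p
    simp only [Function.comp, Pi.add_apply]
    refine Finset.sum_congr rfl fun i _ => by ring
  refine ⟨hac, ?_, ?_⟩
  · rw [integrable_congr hllr, hν, integrable_map_measure hh.aestronglyMeasurable hT.aemeasurable,
      hcomp]
    exact integrable_finsetSum _ fun i _ => (hi1 i).add ((hi2 i).div_const 2)
  · rw [integral_congr_ae hllr, hν, integral_map hT.aemeasurable hh.aestronglyMeasurable]
    have := hcomp
    simp only [Function.comp_def] at this
    rw [this, integral_finsetSum (f := fun i (p : X × (Fin k → ℝ)) => g p.1 i * p.2 i + g p.1 i ^ 2 / 2) _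
      fun i _ => (hi1 i).add ((hi2 i).div_const 2),
      integral_finsetSum _ fun i _ => (hg2 i).integrable_sq, Finset.sum_div]
    refine Finset.sum_congr rfl fun i _ => ?_
    rw [integral_add (hi1 i) ((hi2 i).div_const 2), hz, integral_div, hsq, zero_add]

lemma lin_memLp {d : ℕ} (b : Fin d → ℝ) :
    MemLp (fun z : Fin d → ℝ => ∑ i, b i * z i) 2 (Measure.pi fun _ : Fin d => gaussianReal 0 1) := by
  refine memLp_finsetSum _ fun i _ => ?_
  exact (MemLp.comp_measurePreserving (g := id) (IsGaussian.memLp_two_id)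
    (measurePreserving_eval (fun _ : Fin d => gaussianReal 0 1) i)).const_mul (b i)

lemma lin_sq {d : ℕ} (b : Fin d → ℝ) :
    ∫ z : Fin d → ℝ, (∑ i, b i * z i) ^ 2 ∂(Measure.pi fun _ : Fin d => gaussianReal 0 1)
      = ∑ i, b i ^ 2 := by
  have h0 : ∫ z : Fin d → ℝ, (∑ i, b i * z i) ∂(Measure.pi fun _ : Fin d => gaussianReal 0 1) = 0 := by
    rw [integral_finsetSum]
    · refine Finset.sum_eq_zero fun i _ => ?_
      rw [integral_const_mul, integral_comp_eval (μ := fun _ : Fin d => gaussianReal 0 1) (i := i)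
        (f := fun x => x) (by fun_prop), integral_id_gaussianReal, mul_zero]
    · exact fun i _ => (integrable_eval (i := i) (IsGaussian.integrable_id)).const_mul _
  rw [← variance_of_integral_eq_zero (Measurable.aemeasurable (by fun_prop)) h0]
  have := variance_sum_pi (μ := fun _ : Fin d => gaussianReal 0 1) (X := fun i x => b i * id x)
    (fun i => IsGaussian.memLp_two_id.const_mul _)
  simp_rw [variance_const_mul, variance_id_gaussianReal] at this
  rw [Finset.sum_fn] at this
  simpa using this

lemma relu_sub_sq (a b : ℝ) : (relu a - relu b) ^ 2 ≤ (a - b) ^ 2 := by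
  unfold relu
  rw [sq_le_sq]
  exact abs_max_sub_max_le_abs a b 0

/-- KL divergence bound between the joint laws of features and labels in the
one-hidden layer neural network model with fixed hidden-to-output layer `V`. -/
theorem klDiv_nn_model_le (d k l : ℕ) (hd : 1 ≤ d) (hk : 1 ≤ k) (hl : 1 ≤ l)
    (σ : ℝ) (hσ : 0 < σ) (V : Matrix (Fin k) (Fin l) ℝ)
    (SigS A : Matrix (Fin d) (Fin d) ℝ)
    (hSigS : SigS.PosSemidef) (hA : A * Aᵀ = SigS)
    (W1 W2 : Matrix (Fin l) (Fin d) ℝ) :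
    klDivR (nnLaw d k l σ V A W1) (nnLaw d k l σ V A W2) ≤
      opNorm V ^ 2 * ((W1 - W2) * SigS * (W1 - W2)ᵀ).trace / (2 * σ ^ 2) := by
  set μ := Measure.pi fun _ : Fin d => gaussianReal 0 1 with hμ
  set γk := Measure.pi fun _ : Fin k => gaussianReal 0 1 with hγk
  let F : Matrix (Fin l) (Fin d) ℝ → (Fin d → ℝ) → Fin k → ℝ := fun W z =>
    V.mulVec (fun j => relu (W.mulVec (A.mulVec z) j))
  have hrelu : Measurable relu := by unfold relu; fun_prop
  have hF : ∀ W, Measurable (F W) := by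
    intro W
    simp only [F, Matrix.mulVec, dotProduct]
    fun_prop
  let g : (Fin d → ℝ) → Fin k → ℝ := fun z => σ⁻¹ • (F W1 z - F W2 z)
  have hg : Measurable g := by
    have := hF W1
    have := hF W2
    fun_prop
  set B := (W1 - W2) * A with hB
  have hgb : ∀ z, ∑ i, g z i ^ 2 ≤ (σ ^ 2)⁻¹ * opNorm V ^ 2 * ∑ j, (∑ i, B j i * z i) ^ 2 := by
    intro z
    have h1 : ∀ i, g z i = σ⁻¹ * (V.mulVec (fun j => relu (W1.mulVec (A.mulVec z) j) -
        relu (W2.mulVec (A.mulVec z) j))) i := by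
      intro i
      have : (fun j => relu (W1.mulVec (A.mulVec z) j) - relu (W2.mulVec (A.mulVec z) j)) =
        (fun j => relu (W1.mulVec (A.mulVec z) j)) - (fun j => relu (W2.mulVec (A.mulVec z) j)) := rfl
      rw [this, Matrix.mulVec_sub]
      rfl
    simp_rw [h1, mul_pow, inv_pow]
    rw [← Finset.mul_sum, mul_assoc]
    gcongr
    refine (opNorm_bound V _).trans ?_
    refine mul_le_mul_of_nonneg_left (Finset.sum_le_sum fun j _ => ?_) (sq_nonneg _)
    refine (relu_sub_sq _ _).trans (le_of_eq ?_)
    have : ∑ i, B j i * z i = (B.mulVec z) j := rfl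
    rw [this, hB, ← Matrix.mulVec_mulVec, Matrix.sub_mulVec]
    rfl
  have hlin : ∀ j, Integrable (fun z : Fin d → ℝ => (∑ i, B j i * z i) ^ 2) μ := fun j =>
    (lin_memLp (B j)).integrable_sq
  have hRint : Integrable (fun z => (σ ^ 2)⁻¹ * opNorm V ^ 2 * ∑ j, (∑ i, B j i * z i) ^ 2) μ :=
    (integrable_finsetSum _ fun j _ => hlin j).const_mul _
  have hgi : ∀ i, Measurable fun z => g z i := fun i => by fun_prop
  have hg2 : ∀ i, MemLp (fun z => g z i) 2 μ := by
    intro i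
    rw [memLp_two_iff_integrable_sq (hgi i).aestronglyMeasurable]
    refine hRint.mono' ((hgi i).pow_const 2).aestronglyMeasurable (ae_of_all _ fun z => ?_)
    rw [Real.norm_of_nonneg (sq_nonneg _)]
    exact (Finset.single_le_sum (f := fun i => g z i ^ 2) (fun i _ => sq_nonneg _)
      (Finset.mem_univ i)).trans (hgb z)
  obtain ⟨hac, hint, hval⟩ := kl_shift μ g hg hg2 (μ.prod γk) _ rfl rfl
  set ν := (μ.prod γk).map (fun p => (p.1, p.2 + g p.1)) with hν
  have hT : Measurable (fun p : (Fin d → ℝ) × (Fin k → ℝ) => (p.1, p.2 + g p.1)) := by fun_prop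
  have hpν : IsProbabilityMeasure ν := Measure.isProbabilityMeasure_map hT.aemeasurable
  let S : (Fin d → ℝ) × (Fin k → ℝ) → (Fin d → ℝ) × (Fin k → ℝ) := fun zw =>
    (A.mulVec zw.1, F W2 zw.1 + σ • zw.2)
  have hS : Measurable S := by
    have := hF W2
    have hA' : Measurable fun z => A.mulVec z := by
      refine measurable_pi_lambda _ fun i => ?_
      simp only [Matrix.mulVec, dotProduct]
      fun_prop
    fun_prop
  have hP2 : nnLaw d k l σ V A W2 = (μ.prod γk).map S := rfl
  have hP1 : nnLaw d k l σ V A W1 = ν.map S := by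
    rw [hν, Measure.map_map hS hT]
    unfold nnLaw
    congr 1
    ext zw : 1
    simp only [Function.comp, S, g]
    congr 1
    change F W1 zw.1 + _ = _
    rw [smul_add, smul_smul, mul_inv_cancel₀ hσ.ne', one_smul]
    abel
  have hpS1 : IsProbabilityMeasure (ν.map S) := Measure.isProbabilityMeasure_map hS.aemeasurable
  have hpS2 : IsProbabilityMeasure ((μ.prod γk).map S) :=
    Measure.isProbabilityMeasure_map hS.aemeasurable
  have hkl : klDivR (nnLaw d k l σ V A W1) (nnLaw d k l σ V A W2) ≤ ∫ p, llr ν (μ.prod γk) p ∂ν := by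
    rw [hP1, hP2]
    have e1 := InformationTheory.toReal_klDiv_of_measure_eq (hac.map hS) (by simp)
    have e2 := InformationTheory.toReal_klDiv_of_measure_eq hac (by simp)
    change ∫ x, llr _ _ x ∂_ ≤ _
    rw [← e1, ← e2]
    exact ENNReal.toReal_mono (InformationTheory.klDiv_ne_top hac hint)
      (InformationTheory.klDiv_map_le _ _ hS)
  refine hkl.trans ?_
  rw [hval]
  have hfin : ∫ x, ∑ i, g x i ^ 2 ∂μ ≤ (σ ^ 2)⁻¹ * opNorm V ^ 2 * ∑ j, ∑ i, B j i ^ 2 := by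
    refine (integral_mono (integrable_finsetSum _ fun i _ => (hg2 i).integrable_sq) hRint hgb).trans
      (le_of_eq ?_)
    rw [integral_const_mul, integral_finsetSum _ fun j _ => hlin j]
    simp_rw [hμ, lin_sq]
  have htr : ((W1 - W2) * SigS * (W1 - W2)ᵀ).trace = ∑ j, ∑ i, B j i ^ 2 := by
    have : (W1 - W2) * SigS * (W1 - W2)ᵀ = B * Bᵀ := by
      rw [← hA, hB, Matrix.transpose_mul]
      simp only [Matrix.mul_assoc]
    rw [this]
    simp [Matrix.trace, Matrix.mul_apply, sq]
  rw [htr]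
  calc _ ≤ ((σ ^ 2)⁻¹ * opNorm V ^ 2 * ∑ j, ∑ i, B j i ^ 2) / 2 := by gcongr
    _ = _ := by field_simp
end

section
/- In the linear transfer learning model (d, k ≥ 1, σ > 0, Σ_T ∈ ℝ^{d×d} positive definite with A_T A_Tᵀ = Σ_T; for W ∈ ℝ^{k×d}, Q_W is the law on ℝ^d × ℝ^k of (A_T z, W A_T z + σ w) with (z, w) a standard Gaussian vector in ℝ^{d+k}; P_W the analogous source law with positive semidefinite Σ_S; ρ(W₁, W₂) := √(trace((W₁ − W₂) Σ_T (W₁ − W₂)ᵀ)); D := d·k − 1), assume D ≥ 20, n_S, n_T ≥ 1, and Δ ≥ √(σ²D·log 2 / n_T). Then for every measurable estimator Ŵ : ((ℝ^d × ℝ^k)^{n_S}) × ((ℝ^d × ℝ^k)^{n_T}) → ℝ^{k×d}, the supremum over all pairs (W_S, W_T) with ρ(W_S, W_T) ≤ Δ of E_{s ∼ P_{W_S}^{⊗n_S}, t ∼ Q_{W_T}^{⊗n_T}}[ ρ(Ŵ(s,t), W_T)² ] is at least σ²D / (256 n_T). -/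
open MeasureTheory ProbabilityTheory Matrix

/-- The transfer distance `ρ(W₁, W₂) = ‖Σ_T^{1/2}(W₁ − W₂)ᵀ‖_F`. -/
noncomputable def rho {k d : ℕ} (SigT : Matrix (Fin d) (Fin d) ℝ)
    (W1 W2 : Matrix (Fin k) (Fin d) ℝ) : ℝ :=
  Real.sqrt ((W1 - W2) * SigT * (W1 - W2)ᵀ).trace

/-- The joint law of `(A z, W A z + σ w)` where `(z, w)` is a standard Gaussian vector in
`ℝ^{d+k}`. -/
noncomputable def linLaw (d k : ℕ) (σ : ℝ) (A : Matrix (Fin d) (Fin d) ℝ)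
    (W : Matrix (Fin k) (Fin d) ℝ) : Measure ((Fin d → ℝ) × (Fin k → ℝ)) :=
  Measure.map
    (fun zw : (Fin d → ℝ) × (Fin k → ℝ) =>
      (A.mulVec zw.1, W.mulVec (A.mulVec zw.1) + σ • zw.2))
    ((Measure.pi fun _ : Fin d => gaussianReal 0 1).prod
      (Measure.pi fun _ : Fin k => gaussianReal 0 1))


theorem lint_fin_prod {n : ℕ} {E : Type*} [MeasurableSpace E] (μ : Fin n → Measure E)
    [∀ i, SigmaFinite (μ i)] (f : Fin n → E → ENNReal) (hf : ∀ i, Measurable (f i)) :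
    ∫⁻ x : Fin n → E, ∏ i, f i (x i) ∂(Measure.pi μ) = ∏ i, ∫⁻ x, f i x ∂(μ i) := by
  induction n with
  | zero => simp
  | succ n ih =>
    have hm : Measurable (fun x : Fin n → E => ∏ i, f i.succ (x i)) :=
      Finset.measurable_prod _ fun i _ => (hf _).comp (measurable_pi_apply i)
    rw [Fin.prod_univ_succ, ← ih (fun i => μ i.succ) (fun i => f i.succ) (fun i => hf _),
      ← lintegral_prod_mul (hf 0).aemeasurable hm.aemeasurable,
      ← ((measurePreserving_piFinSuccAbove μ 0).symm).lintegral_comp_emb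
        (MeasurableEquiv.measurableEmbedding _)]
    simp_rw [MeasurableEquiv.piFinSuccAbove_symm_apply, Fin.insertNthEquiv,
            Fin.prod_univ_succ, Fin.insertNth_zero, Equiv.coe_fn_mk, Fin.cons_succ,
            Fin.zero_succAbove, Fin.cons_zero]
    rfl

theorem pi_withDens {n : ℕ} {E : Type*} [MeasurableSpace E] (μ : Fin n → Measure E)
    [∀ i, SigmaFinite (μ i)] (f : Fin n → E → ENNReal) (hf : ∀ i, Measurable (f i))
    [∀ i, SigmaFinite ((μ i).withDensity (f i))] :
    Measure.pi (fun i => (μ i).withDensity (f i)) =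
      (Measure.pi μ).withDensity (fun x => ∏ i, f i (x i)) := by
  refine Measure.pi_eq fun s hs => ?_
  rw [withDensity_apply _ (MeasurableSet.univ_pi hs),
    ← lintegral_indicator (MeasurableSet.univ_pi hs)]
  simp_rw [fun i => withDensity_apply (μ := μ i) (f i) (hs i), ← lintegral_indicator (hs _)]
  rw [← lint_fin_prod _ _ (fun i => (hf i).indicator (hs i))]
  congr 1
  ext x
  by_cases h : x ∈ Set.univ.pi s
  · rw [Set.indicator_of_mem h]
    exact Finset.prod_congr rfl fun i _ => (Set.indicator_of_mem (h i trivial) _).symm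
  · rw [Set.indicator_of_notMem h]
    simp only [Set.mem_univ_pi, not_forall] at h
    obtain ⟨i, hi⟩ := h
    exact (Finset.prod_eq_zero (Finset.mem_univ i) (Set.indicator_of_notMem hi _)).symm

/-- Cameron–Martin property for a measure and a shift. -/
def CM {E : Type*} [MeasurableSpace E] [Add E] (μ : Measure E) (s : E) (l : E → ℝ) (q : ℝ) : Prop :=
  μ.map (fun x => x + s) = μ.withDensity (fun x => ENNReal.ofReal (Real.exp (l x - q)))

theorem cm_gauss (s : ℝ) : CM (gaussianReal 0 1) s (fun x => s * x) (s ^ 2 / 2) := by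
  unfold CM
  rw [gaussianReal_map_add_const, gaussianReal_of_var_ne_zero _ one_ne_zero,
    gaussianReal_of_var_ne_zero _ one_ne_zero, ← withDensity_mul _ (by fun_prop) (by fun_prop)]
  congr 1
  ext x
  simp only [Pi.mul_apply, gaussianPDF, gaussianPDFReal]
  rw [← ENNReal.ofReal_mul (by positivity), mul_assoc (_⁻¹) (Real.exp _), ← Real.exp_add]
  congr 3
  norm_num
  ring

theorem cm_pi {n : ℕ} {E : Type*} [MeasurableSpace E] [Add E] [MeasurableAdd E]
    (μ : Measure E) [IsProbabilityMeasure μ]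
    (s : Fin n → E) (l : Fin n → E → ℝ) (hl : ∀ i, Measurable (l i)) (q : Fin n → ℝ)
    (h : ∀ i, CM μ (s i) (l i) (q i)) :
    CM (Measure.pi fun _ : Fin n => μ) s (fun x => ∑ i, l i (x i)) (∑ i, q i) := by
  unfold CM at *
  have hp : ∀ i, IsProbabilityMeasure (μ.map (fun x => x + s i)) := fun i =>
    Measure.isProbabilityMeasure_map (by fun_prop)
  have h1 := Measure.pi_map_pi (μ := fun _ : Fin n => μ) (f := fun i x => x + s i)
    (fun i => by fun_prop)
  have : ∀ i, IsProbabilityMeasure (μ.withDensity (fun x => ENNReal.ofReal (Real.exp (l i x - q i)))) :=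
    fun i => h i ▸ hp i
  simp_rw [h] at h1
  rw [pi_withDens _ _ (by fun_prop)] at h1
  refine Eq.trans ?_ (h1.trans ?_)
  · rfl
  · congr 1
    ext x
    rw [← ENNReal.ofReal_prod_of_nonneg (fun _ _ => by positivity), ← Real.exp_sum,
      Finset.sum_sub_distrib]

theorem sym_pi {n : ℕ} {E : Type*} [MeasurableSpace E] [Neg E] [MeasurableNeg E]
    (μ : Measure E) [IsProbabilityMeasure μ] (h : μ.map (fun x => -x) = μ) :
    (Measure.pi fun _ : Fin n => μ).map (fun x => -x) = Measure.pi fun _ : Fin n => μ := by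
  have : ∀ i : Fin n, IsProbabilityMeasure (μ.map (fun x => -x)) := fun i => by rw [h]; infer_instance
  have h1 := Measure.pi_map_pi (μ := fun _ : Fin n => μ) (f := fun i x => -x)
    (fun i => by fun_prop)
  simp_rw [h] at h1
  exact h1

theorem cm_bound {E : Type*} [MeasurableSpace E] [AddCommGroup E] [MeasurableAdd E] [MeasurableNeg E]
    (μ : Measure E) [IsProbabilityMeasure μ] (hsym : μ.map (fun x => -x) = μ)
    (s : E) (l : E → ℝ) (hl : Measurable l) (q : ℝ) (hq : 0 ≤ q) (h : CM μ s l q)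
    (hls : ∀ w, l (w + s) = l w + 2 * q) (hln : ∀ w, l (-w) = - l w)
    (f g : E → ENNReal) (hf : Measurable f) (hg : Measurable g) (m : ENNReal)
    (hfg : ∀ w, m ≤ f w + g (w + s)) :
    ENNReal.ofReal (Real.exp (-q)) * (m / 2) ≤ ∫⁻ w, f w ∂μ + ∫⁻ w, g w ∂μ := by
  set G : Set E := {w | l w ≤ 0} with hG
  have hGm : MeasurableSet G := measurableSet_le hl measurable_const
  have hPG : 1 / 2 ≤ μ G := by
    have h2 : μ {w | 0 ≤ l w} = μ G := by
      conv_lhs => rw [← hsym]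
      rw [Measure.map_apply (by fun_prop) (measurableSet_le measurable_const hl)]
      congr 1
      ext w
      simp [hG, hln]
    have h3 : (1 : ENNReal) ≤ μ G + μ G := by
      calc (1 : ENNReal) = μ Set.univ := measure_univ.symm
        _ ≤ μ (G ∪ {w | 0 ≤ l w}) := measure_mono fun w _ => le_total (l w) 0
        _ ≤ μ G + μ {w | 0 ≤ l w} := measure_union_le _ _
        _ = _ := by rw [h2]
    rw [← two_mul, mul_comm] at h3
    exact ENNReal.div_le_of_le_mul h3
  have hshift : ENNReal.ofReal (Real.exp (-q)) * ∫⁻ w in G, g (w + s) ∂μ ≤ ∫⁻ w, g w ∂μ := by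
    have e1 : ∫⁻ w in G, g (w + s) ∂μ = ∫⁻ x, ({x | l x ≤ 2 * q}.indicator g) x ∂(μ.map (fun x => x + s)) := by
      rw [lintegral_map (hg.indicator (measurableSet_le hl measurable_const)) (by fun_prop),
        ← lintegral_indicator hGm]
      congr 1
      ext w
      by_cases hw : l w ≤ 0
      · rw [Set.indicator_of_mem (by exact hw), Set.indicator_of_mem]
        simp only [Set.mem_ofPred_eq, hls]; linarith
      · rw [Set.indicator_of_notMem (by exact hw), Set.indicator_of_notMem]
        simp only [Set.mem_ofPred_eq, hls]; linarith
    rw [e1, h, lintegral_withDensity_eq_lintegral_mul _ (by fun_prop)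
      (hg.indicator (measurableSet_le hl measurable_const)), ← lintegral_const_mul _ (by
        exact Measurable.mul (by fun_prop) (hg.indicator (measurableSet_le hl measurable_const)))]
    refine lintegral_mono fun x => ?_
    simp only [Pi.mul_apply]
    by_cases hx : l x ≤ 2 * q
    · rw [Set.indicator_of_mem (by exact hx), ← mul_assoc, ← ENNReal.ofReal_mul (by positivity),
        ← Real.exp_add]
      refine mul_le_of_le_one_left' (ENNReal.ofReal_le_one.2 (Real.exp_le_one_iff.2 (by linarith)))
    · rw [Set.indicator_of_notMem (by exact hx)]; simp
  have hf' : ENNReal.ofReal (Real.exp (-q)) * ∫⁻ w in G, f w ∂μ ≤ ∫⁻ w, f w ∂μ :=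
    (mul_le_of_le_one_left' (ENNReal.ofReal_le_one.2 (Real.exp_le_one_iff.2 (by linarith)))).trans
      (setLIntegral_le_lintegral _ _)
  refine le_trans ?_ (add_le_add hf' hshift)
  rw [← mul_add, ← lintegral_add_left hf]
  gcongr
  calc m / 2 ≤ m * μ G := by
        rw [ENNReal.div_eq_inv_mul, mul_comm]; gcongr; simpa using hPG
    _ = ∫⁻ w in G, m ∂μ := by simp
    _ ≤ _ := lintegral_mono fun w => hfg w

theorem gauss_sq : ∫⁻ x, ENNReal.ofReal (x ^ 2) ∂(gaussianReal 0 1) = 1 := by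
  have hv := variance_fun_id_gaussianReal (μ := 0) (v := 1)
  rw [variance_of_integral_eq_zero (by fun_prop) (by simp)] at hv
  rw [← ofReal_integral_eq_lintegral_ofReal, hv]
  · simp
  · exact (memLp_id_gaussianReal 2).integrable_sq
  · exact ae_of_all _ fun x => sq_nonneg x

theorem lint_sample {d k n : ℕ} (σ : ℝ) (A : Matrix (Fin d) (Fin d) ℝ)
    (W : Matrix (Fin k) (Fin d) ℝ) (F : (Fin n → (Fin d → ℝ) × (Fin k → ℝ)) → ENNReal)
    (hF : Measurable F) :
    ∫⁻ t, F t ∂(Measure.pi fun _ : Fin n => linLaw d k σ A W) =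
      ∫⁻ z : Fin n → Fin d → ℝ, ∫⁻ w : Fin n → Fin k → ℝ,
        F (fun t => (A.mulVec (z t), W.mulVec (A.mulVec (z t)) + σ • w t))
        ∂(Measure.pi fun _ => Measure.pi fun _ => gaussianReal 0 1)
        ∂(Measure.pi fun _ => Measure.pi fun _ => gaussianReal 0 1) := by
  have hm : Measurable (fun zw : (Fin d → ℝ) × (Fin k → ℝ) =>
      (A.mulVec zw.1, W.mulVec (A.mulVec zw.1) + σ • zw.2)) := by
    apply Continuous.measurable
    fun_prop
  have : IsProbabilityMeasure (Measure.map
    (fun zw : (Fin d → ℝ) × (Fin k → ℝ) =>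
      (A.mulVec zw.1, W.mulVec (A.mulVec zw.1) + σ • zw.2))
    ((Measure.pi fun _ : Fin d => gaussianReal 0 1).prod
      (Measure.pi fun _ : Fin k => gaussianReal 0 1))) :=
    Measure.isProbabilityMeasure_map hm.aemeasurable
  unfold linLaw
  rw [← Measure.pi_map_pi (fun _ => hm.aemeasurable), lintegral_map hF (by fun_prop),
    ← (measurePreserving_arrowProdEquivProdArrow _ _ (Fin n)
      (fun _ => (Measure.pi fun _ : Fin d => gaussianReal 0 1))
      (fun _ => (Measure.pi fun _ : Fin k => gaussianReal 0 1))).symm.lintegral_comp_emb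
      (MeasurableEquiv.measurableEmbedding _), lintegral_prod]
  · rfl
  · apply Measurable.aemeasurable
    apply hF.comp
    have := (MeasurableEquiv.arrowProdEquivProdArrow (Fin d → ℝ) (Fin k → ℝ) (Fin n)).symm.measurable
    fun_prop

theorem pair_bound {d k n : ℕ} (σ : ℝ) (hσ : 0 < σ) (A : Matrix (Fin d) (Fin d) ℝ)
    (W1 W2 : Matrix (Fin k) (Fin d) ℝ) (i : Fin k) (j : Fin d) (c : ℝ)
    (hW : W1 * A = W2 * A + Matrix.single i j c) (hc : n * (c / σ) ^ 2 ≤ 1)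
    (h : (Fin n → (Fin d → ℝ) × (Fin k → ℝ)) → ℝ) (hh : Measurable h) (a b : ℝ) :
    ENNReal.ofReal ((a - b) ^ 2 / 8) ≤
      ∫⁻ t, ENNReal.ofReal ((h t - a) ^ 2) ∂(Measure.pi fun _ : Fin n => linLaw d k σ A W1)
      + ∫⁻ t, ENNReal.ofReal ((h t - b) ^ 2) ∂(Measure.pi fun _ : Fin n => linLaw d k σ A W2) := by
  set r := c / σ with hr
  have hm : ∀ (W : Matrix (Fin k) (Fin d) ℝ), Measurable
      (fun zw : (Fin n → Fin d → ℝ) × (Fin n → Fin k → ℝ) => fun t =>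
      (A.mulVec (zw.1 t), W.mulVec (A.mulVec (zw.1 t)) + σ • (zw.2 t))) := by
    intro W
    apply Continuous.measurable
    fun_prop
  have hmF : ∀ (W : Matrix (Fin k) (Fin d) ℝ) (a : ℝ), Measurable
      (fun zw : (Fin n → Fin d → ℝ) × (Fin n → Fin k → ℝ) => ENNReal.ofReal ((h (fun t =>
      (A.mulVec (zw.1 t), W.mulVec (A.mulVec (zw.1 t)) + σ • (zw.2 t))) - a) ^ 2)) := by
    intro W a
    have := hh.comp (hm W)
    exact ((this.sub_const a).pow_const 2).ennreal_ofReal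
  rw [lint_sample _ _ _ _ (by fun_prop), lint_sample _ _ _ _ (by fun_prop),
    ← lintegral_add_left (hmF W1 a).lintegral_prod_right']
  have key : ∀ z : Fin n → Fin d → ℝ,
      ENNReal.ofReal (Real.exp (-∑ t, (r * z t j) ^ 2 / 2)) * (ENNReal.ofReal ((a - b) ^ 2 / 2) / 2) ≤
      (∫⁻ w : Fin n → Fin k → ℝ, ENNReal.ofReal ((h (fun t =>
      (A.mulVec (z t), W1.mulVec (A.mulVec (z t)) + σ • (w t))) - a) ^ 2)
        ∂(Measure.pi fun _ => Measure.pi fun _ => gaussianReal 0 1)) +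
      ∫⁻ w : Fin n → Fin k → ℝ, ENNReal.ofReal ((h (fun t =>
      (A.mulVec (z t), W2.mulVec (A.mulVec (z t)) + σ • (w t))) - b) ^ 2)
        ∂(Measure.pi fun _ => Measure.pi fun _ => gaussianReal 0 1) := by
    intro z
    set s : Fin n → Fin k → ℝ := fun t i' => if i' = i then r * z t j else 0 with hs
    have hq : ∑ t, (r * z t j) ^ 2 / 2 = ∑ t, ∑ i', (s t i') ^ 2 / 2 := by
      refine Finset.sum_congr rfl fun t _ => ?_
      rw [Finset.sum_eq_single i] <;> simp +contextual [hs]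
    rw [hq]
    refine cm_bound _ (sym_pi _ (sym_pi _ (by simpa using gaussianReal_map_neg (μ := 0) (v := 1)))) s
      (fun w => ∑ t, ∑ i', s t i' * w t i') (by fun_prop) _ (by positivity) ?_ ?_ ?_ _ _
      ((hmF W1 a).comp measurable_prodMk_left) ((hmF W2 b).comp measurable_prodMk_left) _ ?_
    · refine cm_pi _ s (fun t x => ∑ i', s t i' * x i') (by fun_prop) _ fun t => ?_
      exact cm_pi _ (s t) (fun i' x => s t i' * x) (by fun_prop) _ fun i' => cm_gauss _
    · intro w
      simp only [Pi.add_apply, mul_add, Finset.sum_add_distrib, Finset.mul_sum]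
      congr 1
      refine Finset.sum_congr rfl fun t _ => Finset.sum_congr rfl fun i' _ => ?_
      ring
    · intro w
      simp
    · intro w
      have e : (fun t => (A.mulVec (z t), W2.mulVec (A.mulVec (z t)) + σ • ((w + s) t))) =
          (fun t => (A.mulVec (z t), W1.mulVec (A.mulVec (z t)) + σ • (w t))) := by
        funext t
        refine Prod.ext rfl ?_
        simp only [Matrix.mulVec_mulVec, hW, Matrix.add_mulVec, Pi.add_apply, smul_add]
        rw [add_assoc, add_comm (σ • w t)]
        congr 2
        funext i'
        simp only [hs, Pi.smul_apply, smul_eq_mul, Matrix.single_mulVec, Function.update_apply]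
        split_ifs
        · rw [hr]; field_simp
        · simp
      simp only [Function.comp_apply] at *
      rw [e, ← ENNReal.ofReal_add (by positivity) (by positivity)]
      apply ENNReal.ofReal_le_ofReal
      generalize h _ = x
      nlinarith [sq_nonneg (2 * x - a - b)]
  refine le_trans ?_ (lintegral_mono key)
  rw [lintegral_mul_const _ (by fun_prop)]
  have hI : ∫⁻ z : Fin n → Fin d → ℝ, ENNReal.ofReal (∑ t, (r * z t j) ^ 2 / 2)
      ∂(Measure.pi fun _ => Measure.pi fun _ => gaussianReal 0 1) ≤ 1 / 2 := by
    have e1 : ∀ t : Fin n, ∫⁻ z : Fin n → Fin d → ℝ, ENNReal.ofReal ((r * z t j) ^ 2 / 2)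
      ∂(Measure.pi fun _ => Measure.pi fun _ => gaussianReal 0 1) = ENNReal.ofReal (r ^ 2 / 2) := by
      intro t
      have m1 := measurePreserving_eval (fun _ : Fin n => Measure.pi fun _ : Fin d => gaussianReal 0 1) t
      have m2 := measurePreserving_eval (fun _ : Fin d => gaussianReal 0 1) j
      have m3 := m2.comp m1
      have := m3.lintegral_comp (f := fun x => ENNReal.ofReal ((r * x) ^ 2 / 2)) (by fun_prop)
      refine this.trans ?_
      have e2 : ∀ x : ℝ, ENNReal.ofReal ((r * x) ^ 2 / 2) =
          ENNReal.ofReal (r ^ 2 / 2) * ENNReal.ofReal (x ^ 2) := fun x => by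
        rw [← ENNReal.ofReal_mul (by positivity)]; congr 1; ring
      simp_rw [e2]
      rw [lintegral_const_mul _ (by fun_prop), gauss_sq, mul_one]
    simp_rw [fun z : Fin n → Fin d → ℝ => ENNReal.ofReal_sum_of_nonneg (s := Finset.univ)
      (f := fun t => (r * z t j) ^ 2 / 2) (fun _ _ => by positivity)]
    rw [lintegral_finsetSum _ (fun _ _ => by fun_prop)]
    simp_rw [e1]
    rw [Finset.sum_const, Finset.card_univ, Fintype.card_fin, nsmul_eq_mul,
      ← ENNReal.ofReal_natCast, ← ENNReal.ofReal_mul (by positivity)]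
    rw [show (1 / 2 : ENNReal) = ENNReal.ofReal (1 / 2) by
      rw [ENNReal.ofReal_div_of_pos (by norm_num)]; simp]
    apply ENNReal.ofReal_le_ofReal
    linarith
  have hE : 1 / 2 ≤ ∫⁻ z : Fin n → Fin d → ℝ, ENNReal.ofReal (Real.exp (-∑ t, (r * z t j) ^ 2 / 2))
      ∂(Measure.pi fun _ => Measure.pi fun _ => gaussianReal 0 1) := by
    have h1 : (1 : ENNReal) ≤ ∫⁻ z : Fin n → Fin d → ℝ,
        (ENNReal.ofReal (Real.exp (-∑ t, (r * z t j) ^ 2 / 2)) +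
          ENNReal.ofReal (∑ t, (r * z t j) ^ 2 / 2))
        ∂(Measure.pi fun _ => Measure.pi fun _ => gaussianReal 0 1) := by
      calc (1 : ENNReal) = ∫⁻ z : Fin n → Fin d → ℝ, 1
            ∂(Measure.pi fun _ => Measure.pi fun _ => gaussianReal 0 1) := by simp
        _ ≤ _ := by
          refine lintegral_mono fun z => ?_
          rw [← ENNReal.ofReal_add (by positivity) (by positivity), ENNReal.one_le_ofReal]
          linarith [Real.add_one_le_exp (-∑ t, (r * z t j) ^ 2 / 2)]
    rw [lintegral_add_left (by fun_prop)] at h1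
    have h2 := h1.trans (add_le_add le_rfl hI)
    have h3 : (1 / 2 : ENNReal) + 1 / 2 = 1 := by simp [ENNReal.inv_two_add_inv_two]
    exact (ENNReal.add_le_add_iff_right (a := 1 / 2) (by simp)).1 (h3.trans_le h2)
  refine le_trans ?_ (mul_le_mul_left hE _)
  rw [show (1 / 2 : ENNReal) = ENNReal.ofReal (1 / 2) by
      rw [ENNReal.ofReal_div_of_pos (by norm_num)]; simp,
    show (2 : ENNReal) = ENNReal.ofReal 2 by simp,
    ← ENNReal.ofReal_div_of_pos (by norm_num), ← ENNReal.ofReal_mul (by norm_num)]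
  apply ENNReal.ofReal_le_ofReal
  linarith

theorem rho_sq {k d : ℕ} (SigT A : Matrix (Fin d) (Fin d) ℝ) (hA : A * Aᵀ = SigT)
    (W1 W2 : Matrix (Fin k) (Fin d) ℝ) :
    rho SigT W1 W2 ^ 2 = ∑ p : Fin k × Fin d, ((W1 * A) p.1 p.2 - (W2 * A) p.1 p.2) ^ 2 := by
  have e : ((W1 - W2) * SigT * (W1 - W2)ᵀ).trace =
      ∑ p : Fin k × Fin d, ((W1 * A) p.1 p.2 - (W2 * A) p.1 p.2) ^ 2 := by
    have : (W1 - W2) * SigT * (W1 - W2)ᵀ = ((W1 * A) - (W2 * A)) * ((W1 * A) - (W2 * A))ᵀ := by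
      rw [← hA, ← Matrix.sub_mul, Matrix.transpose_mul]
      simp only [Matrix.mul_assoc]
    rw [this, Fintype.sum_prod_type]
    generalize W1 * A = X1
    generalize W2 * A = X2
    simp [Matrix.trace, Matrix.mul_apply, pow_two]
  unfold rho
  rw [Real.sq_sqrt, e]
  rw [e]
  positivity

/-- The hypercube matrices. -/
noncomputable def cubeB {k d : ℕ} (δ : ℝ) (v : Fin k × Fin d → Bool) : Matrix (Fin k) (Fin d) ℝ :=
  Matrix.of fun i j => if v (i, j) then δ else -δ

/-- Flip one sign. -/
def flipAt {ι : Type} [DecidableEq ι] (p : ι) (v : ι → Bool) : ι → Bool :=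
  Function.update v p (!v p)

theorem flipAt_inv {ι : Type} [DecidableEq ι] (p : ι) : Function.Involutive (flipAt p) := by
  intro v
  simp [flipAt]

theorem flipAt_self {ι : Type} [DecidableEq ι] (p : ι) (v : ι → Bool) : flipAt p v p = !v p := by
  simp [flipAt]

theorem flipAt_ne {ι : Type} [DecidableEq ι] (p : ι) (v : ι → Bool) (p' : ι) (h : p' ≠ p) :
    flipAt p v p' = v p' := by
  simp [flipAt, h]

theorem cubeB_flip {k d : ℕ} (δ : ℝ) (v : Fin k × Fin d → Bool) (p : Fin k × Fin d) :
    cubeB δ v = cubeB δ (flipAt p v) + Matrix.single p.1 p.2 (2 * cubeB δ v p.1 p.2) := by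
  obtain ⟨i, j⟩ := p
  ext i' j'
  simp only [cubeB, Matrix.of_apply, Matrix.add_apply, Matrix.single_apply]
  by_cases h : i = i' ∧ j = j'
  · obtain ⟨rfl, rfl⟩ := h
    rw [flipAt_self]
    cases v (i, j) <;> simp <;> ring
  · have h' : (i', j') ≠ (i, j) := fun hh => h ⟨(Prod.ext_iff.1 hh).1.symm, (Prod.ext_iff.1 hh).2.symm⟩
    simp [h, flipAt_ne _ _ _ h']

theorem assouad_sum {ι : Type} [Fintype ι] [DecidableEq ι] (R : (ι → Bool) → ι → ENNReal)
    (c S : ENNReal) (hS : ∀ v, ∑ p, R v p ≤ S)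
    (hR : ∀ v p, c ≤ R v p + R (flipAt p v) p) :
    Fintype.card ι * c ≤ 2 * S := by
  have h1 : ∀ p, (Fintype.card (ι → Bool) : ENNReal) * c ≤ 2 * ∑ v, R v p := by
    intro p
    have e : ∑ v, R (flipAt p v) p = ∑ v, R v p :=
      Equiv.sum_comp (flipAt_inv p).toPerm (fun v => R v p)
    calc (Fintype.card (ι → Bool) : ENNReal) * c = ∑ v : ι → Bool, c := by simp
      _ ≤ ∑ v, (R v p + R (flipAt p v) p) := Finset.sum_le_sum fun v _ => hR v p
      _ = _ := by rw [Finset.sum_add_distrib, e, two_mul]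
  have h2 : (Fintype.card (ι → Bool) : ENNReal) * (Fintype.card ι * c) ≤
      (Fintype.card (ι → Bool) : ENNReal) * (2 * S) := by
    calc (Fintype.card (ι → Bool) : ENNReal) * (Fintype.card ι * c)
        = ∑ p : ι, (Fintype.card (ι → Bool) : ENNReal) * c := by
          rw [Finset.sum_const, Finset.card_univ, nsmul_eq_mul]; ring
      _ ≤ ∑ p : ι, 2 * ∑ v, R v p := Finset.sum_le_sum fun p _ => h1 p
      _ = 2 * ∑ v, ∑ p, R v p := by rw [← Finset.mul_sum, Finset.sum_comm]
      _ ≤ 2 * ∑ v : ι → Bool, S := by gcongr with v; exact hS v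
      _ = _ := by rw [Finset.sum_const, Finset.card_univ, nsmul_eq_mul]; ring
  exact (ENNReal.mul_le_mul_iff_right (by simp) (ENNReal.natCast_ne_top _)).1 h2

instance linLaw_prob {d k : ℕ} (σ : ℝ) (A : Matrix (Fin d) (Fin d) ℝ)
    (W : Matrix (Fin k) (Fin d) ℝ) : IsProbabilityMeasure (linLaw d k σ A W) := by
  unfold linLaw
  apply Measure.isProbabilityMeasure_map
  apply Continuous.aemeasurable
  fun_prop

/-- minimax lower bound in the large transfer-distance regime
(Lemma `b1`, first part, of the paper). -/
theorem minimax_lower_bound_large_distance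
    (d k : ℕ) (hd : 1 ≤ d) (hk : 1 ≤ k) (σ : ℝ) (hσ : 0 < σ)
    (SigS SigT AS AT : Matrix (Fin d) (Fin d) ℝ)
    (hSS : SigS.PosSemidef) (hST : SigT.PosDef)
    (hAS : AS * ASᵀ = SigS) (hAT : AT * ATᵀ = SigT)
    (D : ℝ) (hD : D = d * k - 1) (hD20 : 20 ≤ D)
    (nS nT : ℕ) (hnS : 1 ≤ nS) (hnT : 1 ≤ nT)
    (Δ : ℝ) (hΔ : Real.sqrt (σ ^ 2 * D * Real.log 2 / nT) ≤ Δ)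
    (Wh : (Fin nS → (Fin d → ℝ) × (Fin k → ℝ)) × (Fin nT → (Fin d → ℝ) × (Fin k → ℝ)) →
      Fin k → Fin d → ℝ)
    (hWh : Measurable Wh) :
    ENNReal.ofReal (σ ^ 2 * D / (256 * nT)) ≤
      ⨆ (WS : Matrix (Fin k) (Fin d) ℝ) (WT : Matrix (Fin k) (Fin d) ℝ)
        (_ : rho SigT WS WT ≤ Δ),
        ∫⁻ st, ENNReal.ofReal (rho SigT (Matrix.of (Wh st)) WT ^ 2)
          ∂((Measure.pi fun _ : Fin nS => linLaw d k σ AS WS).prod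
            (Measure.pi fun _ : Fin nT => linLaw d k σ AT WT)) := by
  have hn : (0 : ℝ) < nT := by exact_mod_cast hnT
  have hdet : IsUnit AT.det := by
    have h1 := hST.det_pos
    rw [← hAT, Matrix.det_mul] at h1
    exact isUnit_iff_ne_zero.2 fun h0 => by simp [h0] at h1
  set δ : ℝ := σ / (2 * Real.sqrt nT) with hδ
  have hδ2 : δ ^ 2 = σ ^ 2 / (4 * nT) := by
    rw [hδ, div_pow, mul_pow, Real.sq_sqrt hn.le]; norm_num
  set W : (Fin k × Fin d → Bool) → Matrix (Fin k) (Fin d) ℝ := fun v => cubeB δ v * AT⁻¹ with hW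
  have hWA : ∀ v, W v * AT = cubeB δ v := fun v => Matrix.nonsing_inv_mul_cancel_right _ _ hdet
  have hB2 : ∀ (v) (p : Fin k × Fin d), (cubeB (k := k) (d := d) δ v p.1 p.2) ^ 2 = δ ^ 2 := fun v p => by
    simp only [cubeB, Matrix.of_apply]; split_ifs <;> ring
  have hcard : ((Fintype.card (Fin k × Fin d) : ℕ) : ℝ) = D + 1 := by
    simp [hD]; ring
  have hlog : (0.69 : ℝ) < Real.log 2 := by linarith [Real.log_two_gt_d9]
  have hrho : ∀ v, rho SigT 0 (W v) ≤ Δ := by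
    intro v
    refine le_trans ?_ hΔ
    apply Real.le_sqrt_of_sq_le
    rw [rho_sq SigT AT hAT]
    simp only [hWA, Matrix.zero_mul, Matrix.zero_apply, zero_sub, neg_sq, hB2]
    rw [Finset.sum_const, Finset.card_univ, nsmul_eq_mul, hcard, hδ2]
    rw [← mul_div_assoc, div_le_div_iff₀ (by positivity) hn]
    have h1 : D + 1 ≤ D * Real.log 2 * 4 := by nlinarith
    have h2 : 0 ≤ σ ^ 2 * nT := by positivity
    nlinarith [mul_le_mul_of_nonneg_left h1 h2]
  set S := ⨆ (WS : Matrix (Fin k) (Fin d) ℝ) (WT : Matrix (Fin k) (Fin d) ℝ)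
        (_ : rho SigT WS WT ≤ Δ),
        ∫⁻ st, ENNReal.ofReal (rho SigT (Matrix.of (Wh st)) WT ^ 2)
          ∂((Measure.pi fun _ : Fin nS => linLaw d k σ AS WS).prod
            (Measure.pi fun _ : Fin nT => linLaw d k σ AT WT)) with hS
  set H : (Fin nS → (Fin d → ℝ) × (Fin k → ℝ)) × (Fin nT → (Fin d → ℝ) × (Fin k → ℝ)) →
      Fin k × Fin d → ℝ := fun st p => (Matrix.of (Wh st) * AT) p.1 p.2 with hH
  have hHm : ∀ p, Measurable fun st => H st p := by
    intro p
    simp only [hH, Matrix.mul_apply, Matrix.of_apply]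
    fun_prop
  have hmain := assouad_sum
    (fun v p => ∫⁻ st, ENNReal.ofReal ((H st p - cubeB δ v p.1 p.2) ^ 2)
          ∂((Measure.pi fun _ : Fin nS => linLaw d k σ AS 0).prod
            (Measure.pi fun _ : Fin nT => linLaw d k σ AT (W v))))
    (ENNReal.ofReal (δ ^ 2 / 2)) S ?_ ?_
  · have h2 : (2 : ENNReal) = ENNReal.ofReal 2 := by simp
    have h3 : (2 : ENNReal) * ENNReal.ofReal (σ ^ 2 * D / (256 * nT)) ≤ 2 * S := by
      refine le_trans ?_ hmain
      rw [h2, ← ENNReal.ofReal_natCast, ← ENNReal.ofReal_mul (by norm_num),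
        ← ENNReal.ofReal_mul (by positivity), hcard, hδ2]
      apply ENNReal.ofReal_le_ofReal
      rw [show 2 * (σ ^ 2 * D / (256 * nT)) = (σ ^ 2 / nT) * (D / 128) by field_simp; ring,
        show (D + 1) * (σ ^ 2 / (4 * nT) / 2) = (σ ^ 2 / nT) * ((D + 1) / 8) by field_simp; ring]
      refine mul_le_mul_of_nonneg_left ?_ (by positivity)
      linarith
    exact (ENNReal.mul_le_mul_iff_right (by simp) (by simp)).1 h3
  · intro v
    rw [← lintegral_finsetSum _ (fun p _ => by have := hHm p; fun_prop)]
    refine le_trans (le_of_eq ?_) (le_iSup_of_le 0 (le_iSup_of_le (W v) (le_iSup_of_le (hrho v) le_rfl)))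
    congr 1
    ext st
    rw [rho_sq SigT AT hAT, hWA, ENNReal.ofReal_sum_of_nonneg (fun _ _ => by positivity)]
  · intro v p
    have hmm : ∀ b : ℝ, Measurable fun st => ENNReal.ofReal ((H st p - b) ^ 2) := fun b => by
      have := hHm p; fun_prop
    rw [lintegral_prod _ (hmm _).aemeasurable, lintegral_prod _ (hmm _).aemeasurable,
      ← lintegral_add_left (hmm _).lintegral_prod_right']
    have hpt : ∀ s, ENNReal.ofReal (δ ^ 2 / 2) ≤
        ∫⁻ t, ENNReal.ofReal ((H (s, t) p - cubeB δ v p.1 p.2) ^ 2)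
          ∂(Measure.pi fun _ : Fin nT => linLaw d k σ AT (W v)) +
        ∫⁻ t, ENNReal.ofReal ((H (s, t) p - cubeB δ (flipAt p v) p.1 p.2) ^ 2)
          ∂(Measure.pi fun _ : Fin nT => linLaw d k σ AT (W (flipAt p v))) := by
      intro s
      have hfl := cubeB_flip δ v p
      refine le_trans (le_of_eq ?_) (pair_bound σ hσ AT (W v) (W (flipAt p v)) p.1 p.2
        (2 * cubeB δ v p.1 p.2) (by rw [hWA, hWA]; exact hfl) ?_ (fun t => H (s, t) p)
        ((hHm p).comp measurable_prodMk_left) _ _)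
      · congr 1
        have := congrFun (congrFun hfl p.1) p.2
        rw [Matrix.add_apply, Matrix.single_apply_same] at this
        have h4 : cubeB δ v p.1 p.2 - cubeB δ (flipAt p v) p.1 p.2 = 2 * cubeB δ v p.1 p.2 := by
          linarith
        rw [h4, mul_pow, hB2]; ring
      · rw [div_pow, mul_pow, hB2, hδ2]
        apply le_of_eq
        field_simp
        norm_num
    calc ENNReal.ofReal (δ ^ 2 / 2)
        = ∫⁻ s, ENNReal.ofReal (δ ^ 2 / 2) ∂(Measure.pi fun _ : Fin nS => linLaw d k σ AS 0) := by
          simp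
      _ ≤ _ := lintegral_mono hpt
end
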